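/- arXiv:1703.09808 — 5 statements merged into one kernel-verified Lean document; each statement's English description precedes it below -/
import Mathlib

section
/- Let d ≥ 2 and let h be a Hermitian d²×d² complex matrix with tr(h) = 0. There exists a pulse sequence decoupling h — i.e. a finite family of unitary d×d matrices u_1,…,u_k and reals α_1,…,α_k ≥ 0 with Σ_i α_i = 1 such that Σ_i α_i (u_i ⊗ u_i)† h (u_i ⊗ u_i) = 0 — if and only if tr(h Π_d) = 0, where Π_d is the swap operator. -/
open Matrix Kronecker
open scoped BigOperators

/-- The swap operator `Π_d` on `ℂ^d ⊗ ℂ^d`. -/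
def swapOp (d : ℕ) : Matrix (Fin d × Fin d) (Fin d × Fin d) ℂ :=
  fun p q => if p.1 = q.2 ∧ p.2 = q.1 then 1 else 0

/-- In a finite-dimensional space the convex hull of a compact set is compact. -/
lemma aux_isCompact_convexHull {E : Type*} [AddCommGroup E] [Module ℝ E] [TopologicalSpace E]
    [IsTopologicalAddGroup E] [ContinuousSMul ℝ E] [FiniteDimensional ℝ E] {s : Set E}
    (hs : IsCompact s) : IsCompact (convexHull ℝ s) := by
  classical
  rcases s.eq_empty_or_nonempty with rfl | ⟨z0, hz0⟩
  · simp
  set N := Module.finrank ℝ E + 1 with hN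
  let f : (Fin N → ℝ) × (Fin N → E) → E := fun p => ∑ i, p.1 i • p.2 i
  have hf : Continuous f := by
    unfold f
    fun_prop
  have hK : IsCompact ((stdSimplex ℝ (Fin N)) ×ˢ (Set.univ.pi fun _ : Fin N => s)) :=
    (isCompact_stdSimplex ℝ (Fin N)).prod (isCompact_univ_pi fun _ => hs)
  have : convexHull ℝ s = f '' ((stdSimplex ℝ (Fin N)) ×ˢ (Set.univ.pi fun _ : Fin N => s)) := by
    apply Set.Subset.antisymm
    · intro x hx
      obtain ⟨ι, hι, z, w, hz, hai, hw, hw1, hx⟩ := eq_pos_convex_span_of_mem_convexHull hx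
      have hcard : Fintype.card ι ≤ Fintype.card (Fin N) := by
        rw [Fintype.card_fin]
        refine hai.card_le_finrank_succ.trans ?_
        rw [hN]
        gcongr
        exact Submodule.finrank_le _
      obtain ⟨e⟩ := Function.Embedding.nonempty_of_card_le hcard
      refine ⟨(Function.extend e w 0, Function.extend e z (fun _ => z0)), ⟨⟨?_, ?_⟩, ?_⟩, ?_⟩
      · intro j
        by_cases hj : ∃ i, e i = j
        · obtain ⟨i, rfl⟩ := hj
          simp only [e.injective.extend_apply]
          exact (hw i).le
        · simp only [Function.extend_apply' _ _ _ hj]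
          simp
      · rw [← hw1]
        refine Eq.symm (Finset.sum_of_injOn e e.injective.injOn (by simp) ?_ ?_)
        · intro j _ hj
          exact Function.extend_apply' _ _ _ (by simpa using hj)
        · intro i _
          exact (e.injective.extend_apply ..).symm
      · intro j _
        by_cases hj : ∃ i, e i = j
        · obtain ⟨i, rfl⟩ := hj
          simp only [e.injective.extend_apply]
          exact hz ⟨i, rfl⟩
        · simp only [Function.extend_apply' _ _ _ hj]
          exact hz0
      · rw [← hx]
        refine Eq.symm (Finset.sum_of_injOn e e.injective.injOn (by simp) ?_ ?_)
        · intro j _ hj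
          simp only
          rw [Function.extend_apply' w _ _ (by simpa using hj)]
          simp
        · intro i _
          simp only [e.injective.extend_apply]
    · rintro _ ⟨⟨w, z⟩, ⟨⟨hw0, hw1⟩, hz⟩, rfl⟩
      exact (convex_convexHull ℝ s).sum_mem (fun i _ => hw0 i) hw1
        (fun i _ => subset_convexHull ℝ s (hz i (Set.mem_univ i)))
  rw [this]
  exact hK.image hf

lemma aux_isCompact_unitary (d : ℕ) :
    IsCompact (Matrix.unitaryGroup (Fin d) ℂ : Set (Matrix (Fin d) (Fin d) ℂ)) := by
  have hK : IsCompact (Set.univ.pi fun _ : Fin d => Set.univ.pi fun _ : Fin d =>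
      Metric.closedBall (0 : ℂ) 1) :=
    isCompact_univ_pi fun _ => isCompact_univ_pi fun _ => isCompact_closedBall _ _
  refine IsCompact.of_isClosed_subset (X := Fin d → Fin d → ℂ) hK ?_ ?_
  · exact isClosed_unitary (R := Matrix (Fin d) (Fin d) ℂ)
  · intro u hu i _ j _
    simpa using entry_norm_bound_of_unitary hu i j

/-- Squared Frobenius norm. -/
noncomputable def auxNsq {n : Type*} [Fintype n] (x : Matrix n n ℂ) : ℝ :=
  ∑ p, ∑ q, Complex.normSq (x p q)

lemma auxNsq_eq {n : Type*} [Fintype n] (x : Matrix n n ℂ) :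
    auxNsq x = (xᴴ * x).trace.re := by
  rw [Matrix.trace, auxNsq, Finset.sum_comm, Complex.re_sum]
  refine Finset.sum_congr rfl fun q _ => ?_
  rw [Matrix.diag_apply, Matrix.mul_apply, Complex.re_sum]
  refine Finset.sum_congr rfl fun p _ => ?_
  simp [Complex.normSq_apply]

lemma auxNsq_conj {n : Type*} [Fintype n] [DecidableEq n] (x U : Matrix n n ℂ)
    (hU : U * Uᴴ = 1) : auxNsq (Uᴴ * x * U) = auxNsq x := by
  rw [auxNsq_eq, auxNsq_eq]
  congr 1
  have : (Uᴴ * x * U)ᴴ * (Uᴴ * x * U) = Uᴴ * (xᴴ * x * U) := by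
    simp only [Matrix.conjTranspose_mul, Matrix.conjTranspose_conjTranspose, Matrix.mul_assoc]
    rw [← Matrix.mul_assoc U Uᴴ, hU, Matrix.one_mul]
  rw [this, Matrix.trace_mul_comm, Matrix.mul_assoc, hU, Matrix.mul_one]

lemma auxNsq_midpoint {n : Type*} [Fintype n] (x y : Matrix n n ℂ) :
    auxNsq ((1/2 : ℝ) • x + (1/2 : ℝ) • y) = (auxNsq x + auxNsq y) / 2 - auxNsq (x - y) / 4 := by
  simp only [auxNsq, Finset.sum_div, ← Finset.sum_add_distrib, ← Finset.sum_sub_distrib]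
  refine Finset.sum_congr rfl fun p _ => Finset.sum_congr rfl fun q _ => ?_
  simp [Complex.normSq_apply]
  ring

lemma auxNsq_eq_zero {n : Type*} [Fintype n] (x : Matrix n n ℂ) (hx : auxNsq x ≤ 0) : x = 0 := by
  have h0 : auxNsq x = 0 := le_antisymm hx
    (Finset.sum_nonneg fun _ _ => Finset.sum_nonneg fun _ _ => Complex.normSq_nonneg _)
  ext p q
  have h1 : ∑ q, Complex.normSq (x p q) = 0 := (Finset.sum_eq_zero_iff_of_nonneg
    (fun _ _ => Finset.sum_nonneg fun _ _ => Complex.normSq_nonneg _)).1 h0 p (Finset.mem_univ _)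
  have h2 : Complex.normSq (x p q) = 0 := (Finset.sum_eq_zero_iff_of_nonneg
    (fun _ _ => Complex.normSq_nonneg _)).1 h1 q (Finset.mem_univ _)
  simpa using h2

lemma aux_swap_comm {d : ℕ} (u : Matrix (Fin d) (Fin d) ℂ) :
    (u ⊗ₖ u) * swapOp d = swapOp d * (u ⊗ₖ u) := by
  ext ⟨i, j⟩ ⟨k, l⟩
  simp only [Matrix.mul_apply, swapOp, Fintype.sum_prod_type, Matrix.kroneckerMap_apply,
    ite_and, mul_ite, ite_mul, mul_one, one_mul, mul_zero, zero_mul]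
  simp [Finset.sum_ite_eq, Finset.sum_ite_eq', mul_comm]

lemma aux_kron_unitary {d : ℕ} {u : Matrix (Fin d) (Fin d) ℂ}
    (hu : u ∈ Matrix.unitaryGroup (Fin d) ℂ) : (u ⊗ₖ u) * (u ⊗ₖ u)ᴴ = 1 := by
  have := Matrix.mem_unitaryGroup_iff.1 (Matrix.kronecker_mem_unitary hu hu)
  simpa [Matrix.star_eq_conjTranspose] using this

lemma aux_trace {d : ℕ} {u : Matrix (Fin d) (Fin d) ℂ}
    (hu : u ∈ Matrix.unitaryGroup (Fin d) ℂ) (h : Matrix (Fin d × Fin d) (Fin d × Fin d) ℂ) :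
    ((u ⊗ₖ u)ᴴ * h * (u ⊗ₖ u)).trace = h.trace := by
  rw [Matrix.trace_mul_comm, ← Matrix.mul_assoc, aux_kron_unitary hu, Matrix.one_mul]

lemma aux_trace_swap {d : ℕ} {u : Matrix (Fin d) (Fin d) ℂ}
    (hu : u ∈ Matrix.unitaryGroup (Fin d) ℂ) (h : Matrix (Fin d × Fin d) (Fin d × Fin d) ℂ) :
    ((u ⊗ₖ u)ᴴ * h * (u ⊗ₖ u) * swapOp d).trace = (h * swapOp d).trace := by
  rw [Matrix.mul_assoc, aux_swap_comm, ← Matrix.mul_assoc, Matrix.mul_assoc _ h, aux_trace hu]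

lemma aux_commutant {d : ℕ} (hd : 2 ≤ d) (x : Matrix (Fin d × Fin d) (Fin d × Fin d) ℂ)
    (hx : ∀ u ∈ Matrix.unitaryGroup (Fin d) ℂ, x * (u ⊗ₖ u) = (u ⊗ₖ u) * x)
    (htr : x.trace = 0) (hsw : (x * swapOp d).trace = 0) : x = 0 := by
  -- entries vanish off the two diagonals
  have hdiag : ∀ i j k l, x (i, j) (k, l) ≠ 0 → (i = k ∧ j = l) ∨ (i = l ∧ j = k) := by
    intro i j k l hne
    have key : ∀ a : Fin d, (if k = a then Complex.I else 1) * (if l = a then Complex.I else 1)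
        = (if i = a then Complex.I else 1) * (if j = a then Complex.I else 1) := by
      intro a
      have hu : Matrix.diagonal (fun i : Fin d => if i = a then Complex.I else 1)
          ∈ Matrix.unitaryGroup (Fin d) ℂ := by
        rw [Matrix.mem_unitaryGroup_iff, Matrix.star_eq_conjTranspose,
          Matrix.diagonal_conjTranspose, Matrix.diagonal_mul_diagonal, ← Matrix.diagonal_one]
        congr 1
        ext i
        by_cases h : i = a <;> simp [h]
      have h1 := congrFun (congrFun (hx _ hu) (i, j)) (k, l)
      rw [Matrix.diagonal_kronecker_diagonal, Matrix.mul_diagonal, Matrix.diagonal_mul,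
        mul_comm] at h1
      exact mul_right_cancel₀ hne h1
    have hI1 : Complex.I ≠ 1 := fun h => by simpa using congrArg Complex.re h
    have hI2 : (1 : ℂ) ≠ Complex.I := hI1.symm
    have hI3 : Complex.I * Complex.I ≠ 1 := by rw [Complex.I_mul_I]; norm_num
    have hI4 : Complex.I * Complex.I ≠ Complex.I := by
      rw [Complex.I_mul_I]; intro h; simpa using congrArg Complex.re h
    have ki := key i
    have kj := key j
    have kk := key k
    by_cases e1 : i = k
    · subst e1
      by_cases e2 : j = l
      · exact Or.inl ⟨rfl, e2⟩
      · exfalso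
        by_cases e3 : i = j <;> by_cases e4 : l = j <;> simp_all
    · by_cases e2 : i = l
      · subst e2
        by_cases e3 : j = k
        · exact Or.inr ⟨rfl, e3⟩
        · exfalso
          by_cases e4 : i = j <;> simp_all
      · exfalso
        rw [if_neg (Ne.symm e1), if_neg (Ne.symm e2), if_pos rfl] at ki
        by_cases e4 : j = i
        · rw [if_pos e4, mul_one] at ki
          exact hI3 ki.symm
        · rw [if_neg e4, mul_one, mul_one] at ki
          exact hI2 ki
  -- permutation invariance
  have hperm : ∀ (σ : Equiv.Perm (Fin d)) (i j k l),
      x (σ i, σ j) (σ k, σ l) = x (i, j) (k, l) := by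
    intro σ i j k l
    have hu : σ.permMatrix ℂ ∈ Matrix.unitaryGroup (Fin d) ℂ := by
      rw [Matrix.mem_unitaryGroup_iff, Matrix.star_eq_conjTranspose,
        Matrix.conjTranspose_permMatrix, ← Matrix.permMatrix_mul]
      simp
    have h1 := congrFun (congrFun (hx _ hu) (i, j)) (σ k, σ l)
    simp only [Matrix.mul_apply, Fintype.sum_prod_type, Matrix.kroneckerMap_apply,
      Equiv.Perm.permMatrix, PEquiv.toMatrix_apply, Equiv.toPEquiv_apply, Option.mem_def,
      Option.some.injEq, EmbeddingLike.apply_eq_iff_eq,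
      mul_ite, ite_mul, mul_one, one_mul, mul_zero, zero_mul] at h1
    simpa [Finset.sum_ite_eq, Finset.sum_ite_eq'] using h1.symm
  obtain ⟨a, b, hab⟩ : ∃ a b : Fin d, a ≠ b := ⟨⟨0, by omega⟩, ⟨1, by omega⟩, by simp⟩
  have htrans : ∀ i j : Fin d, i ≠ j → ∃ σ : Equiv.Perm (Fin d), σ a = i ∧ σ b = j := by
    intro i j hij
    refine ⟨Equiv.swap (Equiv.swap a i b) j * Equiv.swap a i, ?_, ?_⟩
    · rw [Equiv.Perm.mul_apply, Equiv.swap_apply_left]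
      apply Equiv.swap_apply_of_ne_of_ne _ hij
      intro h
      have := (Equiv.swap a i).injective (a₁ := a) (a₂ := b) (by simpa using h)
      exact hab this
    · simp
  have hA : ∀ i, x (i, i) (i, i) = x (a, a) (a, a) := by
    intro i
    simpa using hperm (Equiv.swap a i) a a a a
  have hB : ∀ i j, i ≠ j → x (i, j) (i, j) = x (a, b) (a, b) := by
    intro i j hij
    obtain ⟨σ, rfl, rfl⟩ := htrans i j hij
    exact hperm σ a b a b
  have hC : ∀ i j, i ≠ j → x (i, j) (j, i) = x (b, a) (a, b) := by
    intro i j hij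
    obtain ⟨σ, rfl, rfl⟩ := htrans j i hij.symm
    exact hperm σ b a a b
  set A := x (a, a) (a, a) with hAdef
  set B := x (a, b) (a, b) with hBdef
  set C := x (b, a) (a, b) with hCdef
  -- a Householder reflection
  have hABC : A = B + C := by
    let v : Fin d → ℂ := Pi.single a 1 + Pi.single b 2
    have hvv : v ⬝ᵥ v = 5 := by
      simp [v, hab, hab.symm]
      norm_num
    have hvs : star v = v := by
      ext i
      simp only [v, Pi.star_apply, Pi.add_apply, Pi.single_apply]
      split_ifs <;> simp
    let R : Matrix (Fin d) (Fin d) ℂ := 1 - (2/5 : ℂ) • Matrix.vecMulVec v v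
    have hRs : Rᴴ = R := by
      simp [R, Matrix.conjTranspose_sub, Matrix.conjTranspose_smul,
        Matrix.conjTranspose_vecMulVec, hvs]
    have hRR : R * R = 1 := by
      have : Matrix.vecMulVec v v * Matrix.vecMulVec v v = (5 : ℂ) • Matrix.vecMulVec v v := by
        rw [Matrix.vecMulVec_mul_vecMulVec, hvv]
        simp [Matrix.vecMulVec_smul]
      simp only [R, Matrix.mul_sub, Matrix.sub_mul, Matrix.mul_one, Matrix.one_mul,
        Matrix.smul_mul, Matrix.mul_smul, this]
      module
    have hu : R ∈ Matrix.unitaryGroup (Fin d) ℂ := by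
      rw [Matrix.mem_unitaryGroup_iff, Matrix.star_eq_conjTranspose, hRs, hRR]
    have hRaa : R a a = 3/5 := by
      simp [R, v, Matrix.vecMulVec_apply, hab, hab.symm]
      norm_num
    have hRab : R a b = -4/5 := by
      simp [R, v, Matrix.vecMulVec_apply, hab, hab.symm]
      norm_num
    have h1 := congrFun (congrFun (hx _ hu) (a, a)) (a, b)
    rw [Matrix.mul_apply, Matrix.mul_apply] at h1
    have hl : ∑ q, x (a, a) q * (R ⊗ₖ R) q (a, b) = A * (R a a * R a b) := by
      refine (Finset.sum_eq_single (a, a) ?_ (by simp)).trans (by simp [hAdef])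
      rintro ⟨k, l⟩ _ hne
      by_cases h0 : x (a, a) (k, l) = 0
      · simp [h0]
      · exfalso
        rcases hdiag _ _ _ _ h0 with ⟨rfl, rfl⟩ | ⟨rfl, rfl⟩ <;> simp at hne
    have hr : ∑ q, (R ⊗ₖ R) (a, a) q * x q (a, b) = R a a * R a b * B + R a b * R a a * C := by
      rw [← Finset.sum_subset (Finset.subset_univ {(a, b), (b, a)}),
        Finset.sum_pair (by simp [hab])]
      · simp [hBdef, hCdef]
      rintro ⟨k, l⟩ _ hne
      by_cases h0 : x (k, l) (a, b) = 0
      · simp [h0]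
      · exfalso
        rcases hdiag _ _ _ _ h0 with ⟨rfl, rfl⟩ | ⟨rfl, rfl⟩ <;> simp at hne
    rw [hl, hr, hRaa, hRab] at h1
    linear_combination (-25/12 : ℂ) * h1
  have hsum : ∀ (A' B' : ℂ), ∑ i : Fin d, ∑ j : Fin d, (if i = j then A' else B')
      = d * (A' + (d - 1) * B') := by
    intro A' B'
    have : ∀ i : Fin d, ∑ j : Fin d, (if i = j then A' else B') = A' + (d - 1) * B' := by
      intro i
      have : ∀ j, (if i = j then A' else B') = (if i = j then A' - B' else 0) + B' := by
        intro j; split_ifs <;> ring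
      simp only [this, Finset.sum_add_distrib, Finset.sum_ite_eq]
      simp
      ring
    simp only [this, Finset.sum_const, Finset.card_univ, Fintype.card_fin, nsmul_eq_mul]
  have e1 : (d : ℂ) * (A + (d - 1) * B) = 0 := by
    rw [← hsum, ← htr, Matrix.trace, Fintype.sum_prod_type]
    refine Finset.sum_congr rfl fun i _ => Finset.sum_congr rfl fun j _ => ?_
    split_ifs with hij
    · subst hij; exact (hA i).symm
    · exact (hB i j hij).symm
  have e2 : (d : ℂ) * (A + (d - 1) * C) = 0 := by
    rw [← hsum, ← hsw, Matrix.trace, Fintype.sum_prod_type]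
    refine Finset.sum_congr rfl fun i _ => Finset.sum_congr rfl fun j _ => ?_
    have : (x * swapOp d).diag (i, j) = x (i, j) (j, i) := by
      rw [Matrix.diag_apply, Matrix.mul_apply]
      refine (Finset.sum_eq_single (j, i) ?_ (by simp)).trans (by simp [swapOp])
      rintro ⟨k, l⟩ _ hne
      have : ¬ (k = j ∧ l = i) := by simpa using hne
      simp [swapOp, this]
    rw [this]
    split_ifs with hij
    · subst hij; exact (hA i).symm
    · exact (hC i j hij).symm
  have hd0 : (d : ℂ) ≠ 0 := by
    have : d ≠ 0 := by omega
    exact_mod_cast this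
  have hd1 : (d : ℂ) - 1 ≠ 0 := by
    rw [sub_ne_zero]
    have : d ≠ 1 := by omega
    exact_mod_cast this
  have hd2 : (d : ℂ) + 1 ≠ 0 := by exact_mod_cast Nat.succ_ne_zero d
  have e1' := (mul_eq_zero.1 e1).resolve_left hd0
  have e2' := (mul_eq_zero.1 e2).resolve_left hd0
  have hA0 : A = 0 := by
    have : ((d : ℂ) + 1) * A = 0 := by linear_combination e1' + e2' + (d - 1) * hABC
    exact (mul_eq_zero.1 this).resolve_left hd2
  have hB0 : B = 0 := by
    rw [hA0, zero_add] at e1'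
    exact (mul_eq_zero.1 e1').resolve_left hd1
  have hC0 : C = 0 := by
    rw [hA0, zero_add] at e2'
    exact (mul_eq_zero.1 e2').resolve_left hd1
  ext ⟨i, j⟩ ⟨k, l⟩
  by_contra hne
  have hne' : x (i, j) (k, l) ≠ 0 := hne
  by_cases hij : i = j
  · subst hij
    rcases hdiag _ _ _ _ hne' with ⟨rfl, rfl⟩ | ⟨rfl, rfl⟩ <;> exact hne' ((hA _).trans hA0)
  · rcases hdiag _ _ _ _ hne' with ⟨rfl, rfl⟩ | ⟨rfl, rfl⟩
    · exact hne' ((hB _ _ hij).trans hB0)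
    · exact hne' ((hC _ _ hij).trans hC0)

/-- For a traceless Hermitian two-qudit interaction `h`, there exists a decoupling pulse
sequence iff `tr (h Π_d) = 0`. -/
theorem decoupling_iff_traceless (d : ℕ) (hd : 2 ≤ d)
    (h : Matrix (Fin d × Fin d) (Fin d × Fin d) ℂ)
    (hherm : h.IsHermitian) (htr : h.trace = 0) :
    (∃ (k : ℕ) (u : Fin k → Matrix (Fin d) (Fin d) ℂ) (α : Fin k → ℝ),
      (∀ i, u i ∈ Matrix.unitaryGroup (Fin d) ℂ) ∧
      (∀ i, 0 ≤ α i) ∧ (∑ i, α i = 1) ∧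
      ∑ i, (α i : ℂ) • ((u i ⊗ₖ u i)ᴴ * h * (u i ⊗ₖ u i)) = 0) ↔
    (h * swapOp d).trace = 0 := by
  constructor
  · rintro ⟨k, u, α, hu, -, hα1, hsum⟩
    have h1 : ((∑ i, (α i : ℂ) • ((u i ⊗ₖ u i)ᴴ * h * (u i ⊗ₖ u i))) * swapOp d).trace = 0 := by
      rw [hsum]; simp
    rw [Finset.sum_mul, Matrix.trace_sum] at h1
    simp only [Matrix.smul_mul, Matrix.trace_smul, aux_trace_swap (hu _), smul_eq_mul] at h1
    rw [← Finset.sum_mul, ← Complex.ofReal_sum, hα1] at h1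
    simpa using h1
  · intro hsw
    let G : Matrix (Fin d) (Fin d) ℂ → Matrix (Fin d × Fin d) (Fin d × Fin d) ℂ :=
      fun u => (u ⊗ₖ u)ᴴ * h * (u ⊗ₖ u)
    have hG : Continuous G := by
      have hk : Continuous fun u : Matrix (Fin d) (Fin d) ℂ => u ⊗ₖ u := by
        refine continuous_matrix fun p q => ?_
        simp only [Matrix.kroneckerMap_apply]
        fun_prop
      exact (hk.matrix_conjTranspose.matrix_mul continuous_const).matrix_mul hk
    set S := G '' (Matrix.unitaryGroup (Fin d) ℂ : Set (Matrix (Fin d) (Fin d) ℂ)) with hS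
    have hK : IsCompact (convexHull ℝ S) :=
      aux_isCompact_convexHull ((aux_isCompact_unitary d).image hG)
    have hne : (convexHull ℝ S).Nonempty :=
      ⟨G 1, subset_convexHull ℝ S ⟨1, one_mem _, rfl⟩⟩
    have hNc : Continuous (auxNsq : Matrix (Fin d × Fin d) (Fin d × Fin d) ℂ → ℝ) := by
      unfold auxNsq
      refine continuous_finsetSum _ fun p _ => continuous_finsetSum _ fun q _ => ?_
      exact Complex.continuous_normSq.comp (continuous_id.matrix_elem p q)
    obtain ⟨x, hxK, hmin⟩ := hK.exists_isMinOn hne hNc.continuousOn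
    -- the hull is stable under conjugation
    have hstab : ∀ u ∈ Matrix.unitaryGroup (Fin d) ℂ, ∀ y ∈ convexHull ℝ S,
        (u ⊗ₖ u)ᴴ * y * (u ⊗ₖ u) ∈ convexHull ℝ S := by
      intro u hu y hy
      let L : Matrix (Fin d × Fin d) (Fin d × Fin d) ℂ →ₗ[ℝ]
          Matrix (Fin d × Fin d) (Fin d × Fin d) ℂ :=
        { toFun := fun y => (u ⊗ₖ u)ᴴ * y * (u ⊗ₖ u)
          map_add' := fun y z => by simp [Matrix.mul_add, Matrix.add_mul]
          map_smul' := fun c y => by simp }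
      have hsub : convexHull ℝ S ⊆ L ⁻¹' (convexHull ℝ S) := by
        refine convexHull_min ?_ ((convex_convexHull ℝ S).linear_preimage L)
        rintro _ ⟨w, hw, rfl⟩
        apply subset_convexHull ℝ S
        refine ⟨w * u, mul_mem hw hu, ?_⟩
        simp only [G, L, LinearMap.coe_mk, AddHom.coe_mk, Matrix.mul_kronecker_mul,
          Matrix.conjTranspose_mul, Matrix.mul_assoc]
      exact hsub hy
    have hinv : ∀ u ∈ Matrix.unitaryGroup (Fin d) ℂ, (u ⊗ₖ u)ᴴ * x * (u ⊗ₖ u) = x := by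
      intro u hu
      set y := (u ⊗ₖ u)ᴴ * x * (u ⊗ₖ u) with hy
      have hyK : y ∈ convexHull ℝ S := hstab u hu x hxK
      have hyN : auxNsq y = auxNsq x := auxNsq_conj x _ (aux_kron_unitary hu)
      have hm : (1/2 : ℝ) • y + (1/2 : ℝ) • x ∈ convexHull ℝ S :=
        convex_convexHull ℝ S hyK hxK (by norm_num) (by norm_num) (by norm_num)
      have h1 : auxNsq x ≤ auxNsq ((1/2 : ℝ) • y + (1/2 : ℝ) • x) := hmin hm
      rw [auxNsq_midpoint, hyN] at h1
      exact sub_eq_zero.1 (auxNsq_eq_zero _ (by linarith))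
    have hcomm : ∀ u ∈ Matrix.unitaryGroup (Fin d) ℂ, x * (u ⊗ₖ u) = (u ⊗ₖ u) * x := by
      intro u hu
      conv_rhs => rw [← hinv u hu]
      rw [← Matrix.mul_assoc, ← Matrix.mul_assoc, aux_kron_unitary hu, Matrix.one_mul]
    have htrx : x.trace = 0 ∧ (x * swapOp d).trace = 0 := by
      have hsub : convexHull ℝ S ⊆ {y | y.trace = 0 ∧ (y * swapOp d).trace = 0} := by
        refine convexHull_min ?_ ?_
        · rintro _ ⟨w, hw, rfl⟩
          exact ⟨(aux_trace hw h).trans htr, (aux_trace_swap hw h).trans hsw⟩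
        · rintro y ⟨hy1, hy2⟩ z ⟨hz1, hz2⟩ s t _ _ _
          constructor
          · simp [Matrix.trace_add, Matrix.trace_smul, hy1, hz1]
          · simp [Matrix.add_mul, Matrix.trace_add, Matrix.trace_smul, hy2, hz2]
      exact hsub hxK
    have hx0 : x = 0 := aux_commutant hd x hcomm htrx.1 htrx.2
    rw [hx0, mem_convexHull_iff_exists_fintype] at hxK
    obtain ⟨ι, _, w, z, hw0, hw1, hz, hsum⟩ := hxK
    choose u hu huz using hz
    let e := Fintype.equivFin ι
    refine ⟨Fintype.card ι, fun i => u (e.symm i), fun i => w (e.symm i),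
      fun i => hu _, fun i => hw0 _, ?_, ?_⟩
    · rw [← hw1]
      exact Equiv.sum_comp e.symm w
    · rw [← hsum, ← Equiv.sum_comp e.symm]
      refine Finset.sum_congr rfl fun i _ => ?_
      rw [← huz]
      ext p q
      simp [G]
end

section
/- Let d ≥ 2, let h be any d²×d² complex matrix, let u_1,…,u_k be unitary d×d matrices, and let α_1,…,α_k be reals with Σ_i α_i = 1. Then the effective interaction h_eff = Σ_i α_i (u_i ⊗ u_i)† h (u_i ⊗ u_i) satisfies tr(h_eff Π_d) = tr(h Π_d); in particular the isotropic strength tr(h Π_d) is conserved under any global pulse sequence. -/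
open Matrix Kronecker
open scoped BigOperators

theorem swapOp_comm (d : ℕ) (v : Matrix (Fin d) (Fin d) ℂ) :
    (v ⊗ₖ v) * swapOp d = swapOp d * (v ⊗ₖ v) := by
  ext ⟨a, b⟩ ⟨c, e⟩
  have h1 : ((v ⊗ₖ v) * swapOp d) (a, b) (c, e) = v a e * v b c := by
    rw [Matrix.mul_apply, Finset.sum_eq_single (e, c)]
    · simp [swapOp, Matrix.kroneckerMap_apply]
    · rintro ⟨x, y⟩ - hxy
      have : ¬ (x = e ∧ y = c) := fun hh => hxy (by rw [hh.1, hh.2])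
      simp [swapOp, this]
    · simp
  have h2 : (swapOp d * (v ⊗ₖ v)) (a, b) (c, e) = v b c * v a e := by
    rw [Matrix.mul_apply, Finset.sum_eq_single (b, a)]
    · simp [swapOp, Matrix.kroneckerMap_apply]
    · rintro ⟨x, y⟩ - hxy
      have : ¬ (a = y ∧ b = x) := fun hh => hxy (by rw [hh.1, hh.2])
      simp [swapOp, this]
    · simp
  rw [h1, h2, mul_comm]

/-- The isotropic strength `tr (h Π_d)` is conserved under any global pulse sequence. -/
theorem isotropic_strength_conserved (d : ℕ) (hd : 2 ≤ d)
    (h : Matrix (Fin d × Fin d) (Fin d × Fin d) ℂ)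
    (k : ℕ) (u : Fin k → Matrix (Fin d) (Fin d) ℂ)
    (hu : ∀ i, u i ∈ Matrix.unitaryGroup (Fin d) ℂ)
    (α : Fin k → ℝ) (hα : ∑ i, α i = 1) :
    ((∑ i, (α i : ℂ) • ((u i ⊗ₖ u i)ᴴ * h * (u i ⊗ₖ u i))) * swapOp d).trace
      = (h * swapOp d).trace := by
  have key : ∀ i, (((u i ⊗ₖ u i)ᴴ * h * (u i ⊗ₖ u i)) * swapOp d).trace
      = (h * swapOp d).trace := by
    intro i
    have hi : u i * (u i)ᴴ = 1 := Matrix.mem_unitaryGroup_iff.mp (hu i)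
    have hk : (u i ⊗ₖ u i) * (u i ⊗ₖ u i)ᴴ = 1 := by
      rw [Matrix.conjTranspose_kronecker, ← Matrix.mul_kronecker_mul, hi,
        Matrix.one_kronecker_one]
    rw [Matrix.mul_assoc, swapOp_comm, Matrix.mul_assoc, Matrix.trace_mul_comm,
      Matrix.mul_assoc, Matrix.mul_assoc, hk, Matrix.mul_one]
  have hα' : ∑ i, (α i : ℂ) = 1 := by exact_mod_cast hα
  rw [Finset.sum_mul, Matrix.trace_sum]
  simp only [Matrix.smul_mul, Matrix.trace_smul, key, smul_eq_mul]
  rw [← Finset.sum_mul, hα', one_mul]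
end

section
/- (Depolarization by bilocal operations, Dür et al.) For every d ≥ 2 there exist finitely many unitary d×d matrices v_1,…,v_k and reals p_1,…,p_k ≥ 0 with Σ_i p_i = 1 such that for every d²×d² complex matrix ρ, Σ_i p_i (v_i ⊗ v_i)† ρ (v_i ⊗ v_i) = A_d · tr(A_d ρ)/tr(A_d) + S_d · tr(S_d ρ)/tr(S_d). -/
open Matrix Kronecker
open scoped BigOperators

/-- The projector `S_d = (I + Π_d)/2` onto the symmetric subspace. -/
noncomputable def symProj (d : ℕ) : Matrix (Fin d × Fin d) (Fin d × Fin d) ℂ :=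
  (1/2 : ℂ) • (1 + swapOp d)

/-- The projector `A_d = (I - Π_d)/2` onto the antisymmetric subspace. -/
noncomputable def antisymProj (d : ℕ) : Matrix (Fin d × Fin d) (Fin d × Fin d) ℂ :=
  (1/2 : ℂ) • (1 - swapOp d)

namespace Depol

abbrev M2 (d : ℕ) := Matrix (Fin d × Fin d) (Fin d × Fin d) ℂ

/-- Conjugation by `v ⊗ v`. -/
noncomputable def conjL {d : ℕ} (v : Matrix (Fin d) (Fin d) ℂ) : M2 d →ₗ[ℂ] M2 d where
  toFun ρ := (v ⊗ₖ v)ᴴ * ρ * (v ⊗ₖ v)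
  map_add' x y := by simp [mul_add, add_mul]
  map_smul' c x := by simp

theorem conjL_apply {d : ℕ} (v : Matrix (Fin d) (Fin d) ℂ) (ρ : M2 d) :
    conjL v ρ = (v ⊗ₖ v)ᴴ * ρ * (v ⊗ₖ v) := rfl

def Ach {d : ℕ} (Φ : M2 d →ₗ[ℂ] M2 d) : Prop :=
  ∃ (ι : Type) (_ : Fintype ι) (v : ι → Matrix (Fin d) (Fin d) ℂ) (p : ι → ℝ),
    (∀ i, v i ∈ Matrix.unitaryGroup (Fin d) ℂ) ∧ (∀ i, 0 ≤ p i) ∧ (∑ i, p i = 1) ∧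
      ∀ ρ, Φ ρ = ∑ i, (p i : ℂ) • conjL (v i) ρ

theorem conjL_conjL {d : ℕ} (v w : Matrix (Fin d) (Fin d) ℂ) (ρ : M2 d) :
    conjL v (conjL w ρ) = conjL (w * v) ρ := by
  simp only [conjL_apply, Matrix.mul_kronecker_mul, Matrix.conjTranspose_mul, Matrix.mul_assoc]

theorem Ach.comp {d : ℕ} {Φ Ψ : M2 d →ₗ[ℂ] M2 d} (h : Ach Φ) (h' : Ach Ψ) :
    Ach (Φ ∘ₗ Ψ) := by
  obtain ⟨ι, _, v, p, hv, hp, hs, hΦ⟩ := h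
  obtain ⟨κ, _, w, q, hw, hq, ht, hΨ⟩ := h'
  refine ⟨ι × κ, inferInstance, fun x => w x.2 * v x.1, fun x => p x.1 * q x.2,
    fun x => mul_mem (hw _) (hv _), fun x => mul_nonneg (hp _) (hq _), ?_, fun ρ => ?_⟩
  · rw [Fintype.sum_prod_type]
    simp [← Finset.mul_sum, ht, hs]
  · rw [Fintype.sum_prod_type, LinearMap.comp_apply, hΦ]
    refine Finset.sum_congr rfl fun i _ => ?_
    rw [hΨ, map_sum, Finset.smul_sum]
    refine Finset.sum_congr rfl fun j _ => ?_
    rw [map_smul, conjL_conjL, smul_smul]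
    push_cast
    rfl

/-- uniform mixture -/
noncomputable def avg {d : ℕ} {ι : Type} [Fintype ι] (v : ι → Matrix (Fin d) (Fin d) ℂ) :
    M2 d →ₗ[ℂ] M2 d := ∑ i, (((Fintype.card ι : ℝ)⁻¹ : ℝ) : ℂ) • conjL (v i)

theorem avg_ach {d : ℕ} {ι : Type} [Fintype ι] [Nonempty ι] (v : ι → Matrix (Fin d) (Fin d) ℂ)
    (hv : ∀ i, v i ∈ Matrix.unitaryGroup (Fin d) ℂ) : Ach (avg v) := by
  refine ⟨ι, inferInstance, v, fun _ => (Fintype.card ι : ℝ)⁻¹, hv, fun _ => by positivity, ?_,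
    fun ρ => by simp [avg, LinearMap.sum_apply]⟩
  simp

theorem avg_apply {d : ℕ} {ι : Type} [Fintype ι] (v : ι → Matrix (Fin d) (Fin d) ℂ) (ρ : M2 d)
    (x y : Fin d × Fin d) :
    avg v ρ x y = (Fintype.card ι : ℂ)⁻¹ * ∑ i, conjL (v i) ρ x y := by
  simp [avg, LinearMap.sum_apply, Matrix.sum_apply, Finset.mul_sum]

/-! Phases -/

abbrev Ph (d : ℕ) := Fin d → rootsOfUnity 4 ℂ

noncomputable instance (d : ℕ) : Fintype (Ph d) :=
  Fintype.ofFinite _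

noncomputable def phU {d : ℕ} (u : Ph d) : Matrix (Fin d) (Fin d) ℂ :=
  Matrix.diagonal fun i => ((u i : ℂˣ) : ℂ)

theorem ph_star (z : rootsOfUnity 4 ℂ) : star ((z : ℂˣ) : ℂ) * ((z : ℂˣ) : ℂ) = 1 := by
  have h : ‖((z : ℂˣ) : ℂ)‖ = 1 := by
    refine Complex.norm_eq_one_of_pow_eq_one (n := 4) ?_ (by norm_num)
    have := z.2
    rw [mem_rootsOfUnity] at this
    simpa using congrArg Units.val this
  have h2 := Complex.conj_mul' ((z : ℂˣ) : ℂ)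
  rw [h] at h2
  simpa using h2

theorem phU_mem {d : ℕ} (u : Ph d) : phU u ∈ Matrix.unitaryGroup (Fin d) ℂ := by
  rw [Matrix.mem_unitaryGroup_iff', phU, Matrix.star_eq_conjTranspose,
    Matrix.diagonal_conjTranspose, Matrix.diagonal_mul_diagonal, ← Matrix.diagonal_one]
  congr 1
  funext i
  exact ph_star (u i)

theorem conj_phU {d : ℕ} (u : Ph d) (ρ : M2 d) (i j k l : Fin d) :
    conjL (phU u) ρ (i, j) (k, l) =
      (star ((u i : ℂˣ) : ℂ) * star ((u j : ℂˣ) : ℂ) * ((u k : ℂˣ) : ℂ) * ((u l : ℂˣ) : ℂ))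
        * ρ (i, j) (k, l) := by
  rw [conjL_apply, phU, Matrix.diagonal_kronecker_diagonal, Matrix.diagonal_conjTranspose,
    Matrix.mul_diagonal, Matrix.diagonal_mul]
  simp
  ring

noncomputable def iU : rootsOfUnity 4 ℂ :=
  ⟨Units.mk0 Complex.I Complex.I_ne_zero, by
    rw [mem_rootsOfUnity]; ext; simp⟩

theorem iU_val : ((iU : ℂˣ) : ℂ) = Complex.I := rfl

noncomputable def phF {d : ℕ} (i j k l : Fin d) (u : Ph d) : ℂ :=
  star ((u i : ℂˣ) : ℂ) * star ((u j : ℂˣ) : ℂ) * ((u k : ℂˣ) : ℂ) * ((u l : ℂˣ) : ℂ)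

theorem phF_mul {d : ℕ} (i j k l : Fin d) (u w : Ph d) :
    phF i j k l (u * w) = phF i j k l u * phF i j k l w := by
  simp [phF]; ring

theorem phF_sum_zero {d : ℕ} (i j k l : Fin d) (w : Ph d) (hw : phF i j k l w ≠ 1) :
    ∑ u, phF i j k l u = 0 := by
  have h : ∑ u, phF i j k l u = (∑ u, phF i j k l u) * phF i j k l w := by
    rw [Finset.sum_mul]
    simp only [← phF_mul]
    exact (Equiv.sum_comp (Equiv.mulRight w) (phF i j k l)).symm
  have : (∑ u, phF i j k l u) * (phF i j k l w - 1) = 0 := by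
    rw [mul_sub, ← h]; ring
  rcases mul_eq_zero.1 this with h | h
  · exact h
  · exact absurd (sub_eq_zero.1 h) hw

theorem negI_ne : -Complex.I ≠ 1 := by
  intro h; simpa using congrArg Complex.re h

theorem phF_sum {d : ℕ} (i j k l : Fin d) :
    ∑ u, phF i j k l u =
      if (i = k ∧ j = l) ∨ (i = l ∧ j = k) then (Fintype.card (Ph d) : ℂ) else 0 := by
  split_ifs with h
  · have : ∀ u : Ph d, phF i j k l u = 1 := by
      intro u
      have e1 := ph_star (u i)
      have e2 := ph_star (u j)
      rcases h with ⟨rfl, rfl⟩ | ⟨rfl, rfl⟩ <;> unfold phF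
      · linear_combination e1 * (star ((u j : ℂˣ) : ℂ) * ((u j : ℂˣ) : ℂ)) + e2
      · linear_combination e1 * (star ((u j : ℂˣ) : ℂ) * ((u j : ℂˣ) : ℂ)) + e2
    simp [this]
  · have hI := negI_ne
    have key : ∃ m, phF i j k l (Pi.mulSingle m iU) ≠ 1 := by
      by_cases h1 : i = k
      · subst h1
        have hjl : l ≠ j := fun e => h (Or.inl ⟨rfl, e.symm⟩)
        refine ⟨j, ?_⟩
        by_cases hij : i = j
        · subst hij; simp [phF, Pi.mulSingle_apply, iU_val, hjl, hI]
        · simp [phF, Pi.mulSingle_apply, iU_val, hjl, hI, hij]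
      · by_cases h2 : i = l
        · subst h2
          have hjl : k ≠ j := fun e => h (Or.inr ⟨rfl, e.symm⟩)
          refine ⟨j, ?_⟩
          by_cases hij : i = j
          · subst hij; simp [phF, Pi.mulSingle_apply, iU_val, hjl, hI]
          · simp [phF, Pi.mulSingle_apply, iU_val, hjl, hI, hij]
        · refine ⟨i, ?_⟩
          by_cases hij : j = i
          · subst hij
            simp [phF, Pi.mulSingle_apply, iU_val, Ne.symm h1, Ne.symm h2]
            norm_num
          · simp [phF, Pi.mulSingle_apply, iU_val, Ne.symm h1, Ne.symm h2, hI, hij]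
    obtain ⟨m, hm⟩ := key
    exact phF_sum_zero i j k l _ hm

noncomputable def P (d : ℕ) : M2 d →ₗ[ℂ] M2 d := avg (phU (d := d))

theorem P_apply {d : ℕ} (ρ : M2 d) (i j k l : Fin d) :
    P d ρ (i, j) (k, l) =
      if (i = k ∧ j = l) ∨ (i = l ∧ j = k) then ρ (i, j) (k, l) else 0 := by
  rw [P, avg_apply]
  have : ∀ u : Ph d, conjL (phU u) ρ (i, j) (k, l) = phF i j k l u * ρ (i, j) (k, l) :=
    fun u => conj_phU u ρ i j k l
  simp only [this]
  rw [← Finset.sum_mul, phF_sum]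
  have hc : (Fintype.card (Ph d) : ℂ) ≠ 0 := by
    exact_mod_cast Fintype.card_ne_zero
  split_ifs
  · field_simp
  · simp

/-! Permutations -/

def peU {d : ℕ} (σ : Equiv.Perm (Fin d)) : Matrix (Fin d) (Fin d) ℂ :=
  fun x y => if x = σ y then 1 else 0

theorem peU_mem {d : ℕ} (σ : Equiv.Perm (Fin d)) : peU σ ∈ Matrix.unitaryGroup (Fin d) ℂ := by
  rw [Matrix.mem_unitaryGroup_iff']
  ext i j
  simp [Matrix.mul_apply, peU, Matrix.one_apply, Matrix.star_apply, eq_comm]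

theorem conj_peU {d : ℕ} (σ : Equiv.Perm (Fin d)) (ρ : M2 d) (i j k l : Fin d) :
    conjL (peU σ) ρ (i, j) (k, l) = ρ (σ i, σ j) (σ k, σ l) := by
  simp [conjL_apply, Matrix.mul_apply, peU, Fintype.sum_prod_type, ite_and, apply_ite (starRingEnd ℂ)]

theorem exists_perm {d : ℕ} {i j x y : Fin d} (h : i ≠ j) (h' : x ≠ y) :
    ∃ τ : Equiv.Perm (Fin d), τ i = x ∧ τ j = y := by
  refine ⟨Equiv.swap (Equiv.swap i x j) y * Equiv.swap i x, ?_, by simp⟩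
  have : x ≠ Equiv.swap i x j := by
    intro e
    have := congrArg (Equiv.swap i x) e
    simp at this
    exact h this
  simp [Equiv.swap_apply_of_ne_of_ne this h']

theorem sum_perm_one {d : ℕ} (f : Fin d → ℂ) (i : Fin d) :
    (d : ℂ) * ∑ σ : Equiv.Perm (Fin d), f (σ i) =
      (Fintype.card (Equiv.Perm (Fin d)) : ℂ) * ∑ x, f x := by
  have h : ∀ x, ∑ σ : Equiv.Perm (Fin d), f (σ x) = ∑ σ : Equiv.Perm (Fin d), f (σ i) := by
    intro x
    rw [← Equiv.sum_comp (Equiv.mulRight (Equiv.swap i x)) (fun σ => f (σ x))]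
    simp
  have h2 : ∑ x, ∑ σ : Equiv.Perm (Fin d), f (σ x) =
      (Fintype.card (Equiv.Perm (Fin d)) : ℂ) * ∑ x, f x := by
    rw [Finset.sum_comm]
    simp only [Equiv.sum_comp]
    simp [Finset.card_univ]
  rw [← h2]
  simp [h]

theorem sum_perm_two {d : ℕ} (f : Fin d → Fin d → ℂ) {i j : Fin d} (hij : i ≠ j) :
    (d * (d - 1) : ℂ) * ∑ σ : Equiv.Perm (Fin d), f (σ i) (σ j) =
      (Fintype.card (Equiv.Perm (Fin d)) : ℂ) * (∑ x, ∑ y, f x y - ∑ x, f x x) := by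
  have h : ∀ x y, x ≠ y → ∑ σ : Equiv.Perm (Fin d), f (σ x) (σ y) =
      ∑ σ : Equiv.Perm (Fin d), f (σ i) (σ j) := by
    intro x y hxy
    obtain ⟨τ, h1, h2⟩ := exists_perm hxy hij
    rw [← Equiv.sum_comp (Equiv.mulRight τ) (fun σ => f (σ x) (σ y))]
    simp [h1, h2]
  have h2 : ∑ x, ∑ y, ∑ σ : Equiv.Perm (Fin d), f (σ x) (σ y) =
      (Fintype.card (Equiv.Perm (Fin d)) : ℂ) * ∑ x, ∑ y, f x y := by
    have : ∀ σ : Equiv.Perm (Fin d), ∑ x, ∑ y, f (σ x) (σ y) = ∑ x, ∑ y, f x y := by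
      intro σ
      rw [← Equiv.sum_comp σ (fun x => ∑ y, f x y)]
      refine Finset.sum_congr rfl fun x _ => ?_
      exact Equiv.sum_comp σ (fun y => f (σ x) y)
    have e : ∑ x, ∑ y, ∑ σ : Equiv.Perm (Fin d), f (σ x) (σ y) =
        ∑ σ : Equiv.Perm (Fin d), ∑ x, ∑ y, f (σ x) (σ y) := by
      rw [Finset.sum_comm]
      simp_rw [Finset.sum_comm (s := (Finset.univ : Finset (Fin d)))
        (t := (Finset.univ : Finset (Equiv.Perm (Fin d))))]
      refine Finset.sum_congr rfl fun σ _ => Finset.sum_comm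
    rw [e]
    simp only [this]
    simp [Finset.card_univ]
  have h3 := sum_perm_one (fun x => f x x) i
  set C := ∑ σ : Equiv.Perm (Fin d), f (σ i) (σ j) with hC
  set E := ∑ σ : Equiv.Perm (Fin d), f (σ i) (σ i) with hE
  have h4 : ∀ x, ∑ σ : Equiv.Perm (Fin d), f (σ x) (σ x) = E := by
    intro x
    rw [← Equiv.sum_comp (Equiv.mulRight (Equiv.swap i x)) (fun σ => f (σ x) (σ x))]
    simp [hE]
  have h5 : ∀ x y, ∑ σ : Equiv.Perm (Fin d), f (σ x) (σ y) = C + if x = y then E - C else 0 := by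
    intro x y
    split_ifs with e
    · subst e; rw [h4]; ring
    · rw [h x y e]; ring
  simp only [h5] at h2
  simp [Finset.sum_add_distrib] at h2
  linear_combination h2 - h3

noncomputable def Q (d : ℕ) : M2 d →ₗ[ℂ] M2 d := avg (peU (d := d))

def Dg (d : ℕ) : M2 d := fun p q => if p = q ∧ p.1 = p.2 then 1 else 0

theorem tr_swap_mul {d : ℕ} (ρ : M2 d) :
    (swapOp d * ρ).trace = ∑ x, ∑ y, ρ (x, y) (y, x) := by
  rw [Finset.sum_comm]
  simp [Matrix.trace, Matrix.mul_apply, swapOp, Fintype.sum_prod_type, ite_and]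

theorem tr_eq {d : ℕ} (ρ : M2 d) : ρ.trace = ∑ x, ∑ y, ρ (x, y) (x, y) := by
  simp [Matrix.trace, Fintype.sum_prod_type]

theorem QP {d : ℕ} (hd : 2 ≤ d) (ρ : M2 d) :
    ∃ δ : ℂ, Q d (P d ρ) =
      (δ / d) • Dg d + ((ρ.trace - δ) / (d * (d - 1))) • (1 - Dg d) +
        (((swapOp d * ρ).trace - δ) / (d * (d - 1))) • (swapOp d - Dg d) := by
  refine ⟨∑ x, ρ (x, x) (x, x), ?_⟩
  have hd0 : (d : ℂ) ≠ 0 := by exact_mod_cast (by omega : d ≠ 0)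
  have hd1 : (d : ℂ) - 1 ≠ 0 := by
    rw [sub_ne_zero]; exact_mod_cast (by omega : d ≠ 1)
  have hc : (Fintype.card (Equiv.Perm (Fin d)) : ℂ) ≠ 0 := by
    exact_mod_cast Fintype.card_ne_zero
  rw [tr_swap_mul, tr_eq]
  ext ⟨i, j⟩ ⟨k, l⟩
  rw [Q, avg_apply]
  simp only [conj_peU, P_apply, EmbeddingLike.apply_eq_iff_eq]
  by_cases h1 : i = k ∧ j = l
  · obtain ⟨rfl, rfl⟩ := h1
    by_cases hij : i = j
    · subst hij
      have := sum_perm_one (fun x => ρ (x, x) (x, x)) i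
      simp [Dg, swapOp]
      field_simp
      linear_combination this
    · have := sum_perm_two (fun x y => ρ (x, y) (x, y)) hij
      simp [Dg, swapOp, hij]
      field_simp
      linear_combination this
  · by_cases h2 : i = l ∧ j = k
    · obtain ⟨rfl, rfl⟩ := h2
      have hij : i ≠ j := fun e => h1 ⟨e, e.symm⟩
      have := sum_perm_two (fun x y => ρ (x, y) (y, x)) hij
      simp [Dg, swapOp, hij, Matrix.one_apply]
      field_simp
      linear_combination this
    · simp [h1, h2, Dg, swapOp, Matrix.one_apply]

/-! Fourier -/

theorem exists_fourier {d : ℕ} (hd : 2 ≤ d) : ∃ F : Matrix (Fin d) (Fin d) ℂ,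
    F ∈ Matrix.unitaryGroup (Fin d) ℂ ∧ ∀ i j, star (F i j) * F i j = (d : ℂ)⁻¹ := by
  have hd0 : d ≠ 0 := by omega
  have hdc : (d : ℂ) ≠ 0 := by exact_mod_cast hd0
  obtain ⟨ζ, hζ⟩ : ∃ ζ : ℂ, IsPrimitiveRoot ζ d := ⟨_, Complex.isPrimitiveRoot_exp d hd0⟩
  have hn : ‖ζ‖ = 1 := hζ.norm'_eq_one hd0
  have hs : star ζ * ζ = 1 := by
    have h2 := Complex.conj_mul' ζ
    rw [hn] at h2
    simpa using h2
  have hr : star (((Real.sqrt d)⁻¹ : ℝ) : ℂ) * (((Real.sqrt d)⁻¹ : ℝ) : ℂ) = (d : ℂ)⁻¹ := by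
    have : (Real.sqrt d)⁻¹ * (Real.sqrt d)⁻¹ = (d : ℝ)⁻¹ := by
      rw [← mul_inv, Real.mul_self_sqrt (by positivity)]
    rw [Complex.star_def, Complex.conj_ofReal, ← Complex.ofReal_mul, this]
    simp
  generalize (((Real.sqrt d)⁻¹ : ℝ) : ℂ) = r at hr
  refine ⟨Matrix.of fun i j => r * ζ ^ ((j : ℕ) * (i : ℕ)), ?_, ?_⟩
  · rw [Matrix.mem_unitaryGroup_iff']
    ext k l
    have e : ∀ m : Fin d, star (r * ζ ^ ((k : ℕ) * (m : ℕ))) * (r * ζ ^ ((l : ℕ) * (m : ℕ))) =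
        (d : ℂ)⁻¹ * ((star ζ) ^ (k : ℕ) * ζ ^ (l : ℕ)) ^ (m : ℕ) := by
      intro m
      rw [← hr, star_mul', star_pow, mul_pow, ← pow_mul, ← pow_mul]; ring
    rw [Matrix.mul_apply]
    simp only [Matrix.star_apply, Matrix.of_apply, e]
    rw [← Finset.mul_sum, Fin.sum_univ_eq_sum_range
      (fun m => ((star ζ) ^ (k : ℕ) * ζ ^ (l : ℕ)) ^ m)]
    by_cases hkl : k = l
    · subst hkl
      rw [← mul_pow, hs]
      simp [hdc]
    · have hz : (star ζ) ^ (k : ℕ) * ζ ^ (l : ℕ) ≠ 1 := by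
        intro h
        apply hkl
        have h3 : ζ ^ (l : ℕ) = ζ ^ (k : ℕ) := by
          have h4 : (star ζ) ^ (k : ℕ) * ζ ^ (k : ℕ) = 1 := by rw [← mul_pow, hs, one_pow]
          linear_combination ζ ^ (k : ℕ) * h - ζ ^ (l : ℕ) * h4
        exact (Fin.ext (hζ.pow_inj l.2 k.2 h3)).symm
      have hz1 : ((star ζ) ^ (k : ℕ) * ζ ^ (l : ℕ)) ^ d = 1 := by
        rw [mul_pow, ← pow_mul, ← pow_mul, mul_comm (k : ℕ), mul_comm (l : ℕ), pow_mul, pow_mul,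
          ← star_pow, hζ.pow_eq_one]
        simp
      rw [geom_sum_eq hz, hz1]
      simp [Matrix.one_apply, hkl]
  · intro i j
    have : star ζ ^ ((j : ℕ) * (i : ℕ)) * ζ ^ ((j : ℕ) * (i : ℕ)) = 1 := by
      rw [← mul_pow, hs, one_pow]
    rw [Matrix.of_apply, star_mul', star_pow, ← hr]
    linear_combination (star r * r) * this

theorem kron_unit {d : ℕ} {v : Matrix (Fin d) (Fin d) ℂ} (hv : v ∈ Matrix.unitaryGroup (Fin d) ℂ) :
    (v ⊗ₖ v)ᴴ * (v ⊗ₖ v) = 1 := by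
  rw [Matrix.mem_unitaryGroup_iff', Matrix.star_eq_conjTranspose] at hv
  rw [Matrix.conjTranspose_kronecker, ← Matrix.mul_kronecker_mul, hv, Matrix.one_kronecker_one]

theorem conj_one {d : ℕ} {v : Matrix (Fin d) (Fin d) ℂ} (hv : v ∈ Matrix.unitaryGroup (Fin d) ℂ) :
    conjL v 1 = 1 := by
  rw [conjL_apply, mul_one, kron_unit hv]

theorem conj_swap {d : ℕ} {v : Matrix (Fin d) (Fin d) ℂ}
    (hv : v ∈ Matrix.unitaryGroup (Fin d) ℂ) : conjL v (swapOp d) = swapOp d := by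
  have : swapOp d * (v ⊗ₖ v) = (v ⊗ₖ v) * swapOp d := by
    ext ⟨i, j⟩ ⟨k, l⟩
    simp [Matrix.mul_apply, swapOp, Fintype.sum_prod_type, ite_and, mul_comm]
  rw [conjL_apply, mul_assoc, this, ← mul_assoc, kron_unit hv, one_mul]

theorem P_conj_D {d : ℕ} (hd : 2 ≤ d) {F : Matrix (Fin d) (Fin d) ℂ}
    (hF : ∀ i j, star (F i j) * F i j = (d : ℂ)⁻¹) :
    P d (conjL F (Dg d)) = (d : ℂ)⁻¹ • (1 + swapOp d - Dg d) := by
  have hd0 : (d : ℂ) ≠ 0 := by exact_mod_cast (by omega : d ≠ 0)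
  have key : ∀ i j k l, conjL F (Dg d) (i, j) (k, l) =
      ∑ m, star (F m i) * star (F m j) * F m k * F m l := by
    intro i j k l
    have : Dg d = Matrix.diagonal fun p => if p.1 = p.2 then 1 else 0 := by
      ext p q
      simp only [Dg, Matrix.diagonal_apply]
      split_ifs <;> simp_all
    rw [conjL_apply, this, Matrix.mul_apply]
    simp only [Matrix.mul_diagonal]
    simp [Fintype.sum_prod_type, mul_assoc]
  ext ⟨i, j⟩ ⟨k, l⟩
  rw [P_apply, key]
  have e1 : ∑ m, star (F m i) * star (F m j) * F m i * F m j = (d : ℂ)⁻¹ := by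
    have : ∀ m, star (F m i) * star (F m j) * F m i * F m j = (d : ℂ)⁻¹ * (d : ℂ)⁻¹ := by
      intro m
      linear_combination (star (F m j) * F m j) * hF m i + (d : ℂ)⁻¹ * hF m j
    rw [Finset.sum_congr rfl fun m _ => this m]
    simp [hd0]
  have e2 : ∑ m, star (F m i) * star (F m j) * F m j * F m i = (d : ℂ)⁻¹ := by
    rw [← e1]; exact Finset.sum_congr rfl fun m _ => by ring
  by_cases h1 : i = k ∧ j = l
  · obtain ⟨rfl, rfl⟩ := h1
    rw [e1]
    by_cases hij : i = j
    · subst hij; simp [Dg, swapOp]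
    · simp [Dg, swapOp, hij]
  · by_cases h2 : i = l ∧ j = k
    · obtain ⟨rfl, rfl⟩ := h2
      have hij : i ≠ j := fun e => h1 ⟨e, e.symm⟩
      rw [e2]
      simp [Dg, swapOp, hij, Matrix.one_apply]
    · simp [h1, h2, Dg, swapOp, Matrix.one_apply]

theorem P_fix {d : ℕ} : P d 1 = 1 ∧ P d (swapOp d) = swapOp d ∧ P d (Dg d) = Dg d := by
  refine ⟨?_, ?_, ?_⟩ <;> ext ⟨i, j⟩ ⟨k, l⟩ <;> rw [P_apply] <;> split_ifs with h <;>
    simp_all [Dg, swapOp, Matrix.one_apply]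

noncomputable def Mx {d : ℕ} (F : Matrix (Fin d) (Fin d) ℂ) : M2 d →ₗ[ℂ] M2 d :=
  ((d : ℂ) + 1)⁻¹ • conjL 1 + ((d : ℂ) / (d + 1)) • conjL F

theorem Mx_ach {d : ℕ} {F : Matrix (Fin d) (Fin d) ℂ} (hF : F ∈ Matrix.unitaryGroup (Fin d) ℂ) :
    Ach (Mx F) := by
  refine ⟨Bool, inferInstance, fun b => cond b 1 F,
    fun b => cond b ((d : ℝ) + 1)⁻¹ ((d : ℝ) / (d + 1)), ?_, ?_, ?_, ?_⟩
  · rintro (_ | _)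
    · exact hF
    · exact one_mem _
  · rintro (_ | _) <;> simp <;> positivity
  · simp; field_simp; ring
  · intro ρ
    rw [Fintype.sum_bool]
    simp only [Mx, LinearMap.add_apply, LinearMap.smul_apply, cond_true, cond_false]
    push_cast
    rfl

theorem total {d : ℕ} (hd : 2 ≤ d) {F : Matrix (Fin d) (Fin d) ℂ}
    (hU : F ∈ Matrix.unitaryGroup (Fin d) ℂ)
    (hF : ∀ i j, star (F i j) * F i j = (d : ℂ)⁻¹) (ρ : M2 d) :
    P d (Mx F (Q d (P d ρ))) =
      ((antisymProj d * ρ).trace / (antisymProj d).trace) • antisymProj d +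
          ((symProj d * ρ).trace / (symProj d).trace) • symProj d := by
  have hd0 : (d : ℂ) ≠ 0 := by exact_mod_cast (by omega : d ≠ 0)
  have hd1 : (d : ℂ) - 1 ≠ 0 := by
    rw [sub_ne_zero]; exact_mod_cast (by omega : d ≠ 1)
  have hd2 : (d : ℂ) + 1 ≠ 0 := by exact_mod_cast (by omega : d + 1 ≠ 0)
  obtain ⟨δ, h⟩ := QP hd ρ
  obtain ⟨f1, f2, f3⟩ := P_fix (d := d)
  have c1 : conjL 1 (Dg d) = Dg d := by simp [conjL_apply]
  have m1 : P d (Mx F 1) = 1 := by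
    simp only [Mx, LinearMap.add_apply, LinearMap.smul_apply, conj_one hU, conj_one (one_mem _),
      map_add, map_smul, f1, ← add_smul]
    rw [show ((d : ℂ) + 1)⁻¹ + d / (d + 1) = 1 by field_simp; ring, one_smul]
  have m2 : P d (Mx F (swapOp d)) = swapOp d := by
    simp only [Mx, LinearMap.add_apply, LinearMap.smul_apply, conj_swap hU, conj_swap (one_mem _),
      map_add, map_smul, f2, ← add_smul]
    rw [show ((d : ℂ) + 1)⁻¹ + d / (d + 1) = 1 by field_simp; ring, one_smul]
  have m3 : P d (Mx F (Dg d)) = ((d : ℂ) + 1)⁻¹ • (1 + swapOp d) := by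
    simp only [Mx, LinearMap.add_apply, LinearMap.smul_apply, c1, map_add, map_smul, f3,
      P_conj_D hd hF, smul_smul]
    rw [show (d : ℂ) / (d + 1) * (d : ℂ)⁻¹ = ((d : ℂ) + 1)⁻¹ by field_simp, ← smul_add]
    congr 1
    abel
  have t1 : (1 : M2 d).trace = d * d := by simp
  have t2 : (swapOp d).trace = d := by
    have := tr_swap_mul (1 : M2 d)
    rw [mul_one] at this
    rw [this]
    simp [Matrix.one_apply, ite_and]
  have a1 : (antisymProj d).trace = d * (d - 1) / 2 := by
    rw [antisymProj, Matrix.trace_smul, Matrix.trace_sub, t1, t2, smul_eq_mul]; ring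
  have a2 : (symProj d).trace = d * (d + 1) / 2 := by
    rw [symProj, Matrix.trace_smul, Matrix.trace_add, t1, t2, smul_eq_mul]; ring
  have a3 : (antisymProj d * ρ).trace = (ρ.trace - (swapOp d * ρ).trace) / 2 := by
    rw [antisymProj, smul_mul_assoc, sub_mul, Matrix.trace_smul, Matrix.trace_sub, one_mul,
      smul_eq_mul]; ring
  have a4 : (symProj d * ρ).trace = (ρ.trace + (swapOp d * ρ).trace) / 2 := by
    rw [symProj, smul_mul_assoc, add_mul, Matrix.trace_smul, Matrix.trace_add, one_mul,
      smul_eq_mul]; ring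
  rw [h, a1, a2, a3, a4]
  simp only [map_add, map_smul, map_sub, m1, m2, m3]
  generalize ρ.trace = t
  generalize (swapOp d * ρ).trace = s
  ext x y
  simp only [antisymProj, symProj, Matrix.add_apply, Matrix.sub_apply, Matrix.smul_apply,
    smul_eq_mul]
  generalize (1 : M2 d) x y = a
  generalize swapOp d x y = b
  field_simp
  ring

end Depol

/-- Depolarization by a finite family of probabilistic bilocal unitaries (Dür et al.). -/
theorem depolarization_by_bilocal_unitaries (d : ℕ) (hd : 2 ≤ d) :
    ∃ (k : ℕ) (v : Fin k → Matrix (Fin d) (Fin d) ℂ) (p : Fin k → ℝ),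
      (∀ i, v i ∈ Matrix.unitaryGroup (Fin d) ℂ) ∧
      (∀ i, 0 ≤ p i) ∧ (∑ i, p i = 1) ∧
      ∀ ρ : Matrix (Fin d × Fin d) (Fin d × Fin d) ℂ,
        ∑ i, (p i : ℂ) • ((v i ⊗ₖ v i)ᴴ * ρ * (v i ⊗ₖ v i)) =
          ((antisymProj d * ρ).trace / (antisymProj d).trace) • antisymProj d +
          ((symProj d * ρ).trace / (symProj d).trace) • symProj d := by
  obtain ⟨F, hU, hF⟩ := Depol.exists_fourier hd
  have hA : Depol.Ach (Depol.P d ∘ₗ (Depol.Mx F ∘ₗ (Depol.Q d ∘ₗ Depol.P d))) :=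
    (Depol.avg_ach _ Depol.phU_mem).comp ((Depol.Mx_ach hU).comp
      ((Depol.avg_ach _ Depol.peU_mem).comp (Depol.avg_ach _ Depol.phU_mem)))
  obtain ⟨ι, _, v, p, hv, hp, hs, h⟩ := hA
  let e := (Fintype.equivFin ι).symm
  refine ⟨Fintype.card ι, fun i => v (e i), fun i => p (e i), fun i => hv _, fun i => hp _, ?_,
    fun ρ => ?_⟩
  · rw [← hs]; exact Equiv.sum_comp e p
  · rw [← Depol.total hd hU hF ρ]
    refine Eq.trans ?_ (h ρ).symm
    exact Equiv.sum_comp e (fun i => (p i : ℂ) • Depol.conjL (v i) ρ)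
end

section
/- (Uniqueness of the isotropic component) Let d ≥ 2 and let h be a d²×d² complex matrix that commutes with u ⊗ u for every unitary d×d matrix u. Then there exist complex numbers a and b such that h = a·I + b·Π_d, where I is the d²×d² identity and Π_d is the swap operator. -/
open Matrix Kronecker

/-- A diagonal unitary forces the entries with different weights to vanish. -/
lemma comm_diag_aux (d : ℕ) (h : Matrix (Fin d × Fin d) (Fin d × Fin d) ℂ)
    (hcomm : ∀ u : Matrix (Fin d) (Fin d) ℂ, u ∈ Matrix.unitaryGroup (Fin d) ℂ →
      h * (u ⊗ₖ u) = (u ⊗ₖ u) * h) (k : Fin d) (p q : Fin d × Fin d) :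
    h p q * ((if q.1 = k then Complex.I else 1) * (if q.2 = k then Complex.I else 1)) =
      ((if p.1 = k then Complex.I else 1) * (if p.2 = k then Complex.I else 1)) * h p q := by
  have hu : Matrix.diagonal (fun i : Fin d => if i = k then Complex.I else 1) ∈
      Matrix.unitaryGroup (Fin d) ℂ := by
    rw [Matrix.mem_unitaryGroup_iff, Matrix.star_eq_conjTranspose, Matrix.diagonal_conjTranspose,
      Matrix.diagonal_mul_diagonal, ← Matrix.diagonal_one]
    congr 1
    ext i
    by_cases hi : i = k <;> simp [hi]
  have := congrFun (congrFun (hcomm _ hu) p) q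
  rw [Matrix.diagonal_kronecker_diagonal, Matrix.mul_diagonal, Matrix.diagonal_mul] at this
  exact this

/-- Off-support entries vanish. -/
lemma comm_supp_aux (d : ℕ) (h : Matrix (Fin d × Fin d) (Fin d × Fin d) ℂ)
    (hcomm : ∀ u : Matrix (Fin d) (Fin d) ℂ, u ∈ Matrix.unitaryGroup (Fin d) ℂ →
      h * (u ⊗ₖ u) = (u ⊗ₖ u) * h) (i j k l : Fin d)
    (h1 : ¬ (i = k ∧ j = l)) (h2 : ¬ (i = l ∧ j = k)) : h (i, j) (k, l) = 0 := by
  have key := fun m => comm_diag_aux d h hcomm m (i, j) (k, l)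
  have a1 : Complex.I ≠ 1 := fun e => by simpa using congrArg Complex.re e
  have a2 : Complex.I * Complex.I = -1 := Complex.I_mul_I
  have a3 : (-1 : ℂ) ≠ 1 := by norm_num
  have a4 : (-1 : ℂ) ≠ Complex.I := fun e => by simpa using congrArg Complex.re e
  have canc : ∀ a b : ℂ, a ≠ b → h (i, j) (k, l) * a = b * h (i, j) (k, l) →
      h (i, j) (k, l) = 0 := by
    intro a b hab e
    have : h (i, j) (k, l) * (a - b) = 0 := by linear_combination e
    rcases mul_eq_zero.1 this with h0 | h0
    · exact h0
    · exact absurd (sub_eq_zero.1 h0) hab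
  have ki := fun hab => canc _ _ hab (key i)
  have kj := fun hab => canc _ _ hab (key j)
  clear key canc hcomm
  by_cases e1 : i = k <;> by_cases e2 : i = l <;> by_cases e3 : j = k <;> by_cases e4 : j = l <;>
    by_cases e5 : i = j <;> simp_all [eq_comm]

/-- Permutation invariance. -/
lemma comm_perm_aux (d : ℕ) (h : Matrix (Fin d × Fin d) (Fin d × Fin d) ℂ)
    (hcomm : ∀ u : Matrix (Fin d) (Fin d) ℂ, u ∈ Matrix.unitaryGroup (Fin d) ℂ →
      h * (u ⊗ₖ u) = (u ⊗ₖ u) * h) (σ : Equiv.Perm (Fin d)) (i j k l : Fin d) :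
    h (σ i, σ j) (σ k, σ l) = h (i, j) (k, l) := by
  have hu : (Matrix.of fun i j : Fin d => if i = σ j then (1 : ℂ) else 0) ∈
      Matrix.unitaryGroup (Fin d) ℂ := by
    rw [Matrix.mem_unitaryGroup_iff']
    ext a b
    simp [Matrix.mul_apply, Matrix.star_apply, Matrix.one_apply, apply_ite]
    by_cases hab : a = b <;> simp [hab, eq_comm]
  have := congrFun (congrFun (hcomm _ hu) (σ i, σ j)) (k, l)
  simpa [Matrix.mul_apply, Fintype.sum_prod_type, Matrix.kroneckerMap_apply, ite_and] using this

/-- Two-transitivity of the symmetric group. -/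
lemma perm_two_aux {α : Type*} [DecidableEq α] (i j k l : α) (hij : i ≠ j) (hkl : k ≠ l) :
    ∃ σ : Equiv.Perm α, σ i = k ∧ σ j = l := by
  refine ⟨(Equiv.swap i k).trans (Equiv.swap (Equiv.swap i k j) l), ?_, ?_⟩
  · simp only [Equiv.trans_apply, Equiv.swap_apply_left]
    apply Equiv.swap_apply_of_ne_of_ne _ hkl
    intro e
    apply hij
    apply (Equiv.swap i k).injective
    rw [← e, Equiv.swap_apply_left]
  · simp

/-- The relation between the three remaining constants. -/
lemma comm_rot_aux (d : ℕ) (h : Matrix (Fin d × Fin d) (Fin d × Fin d) ℂ)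
    (hcomm : ∀ u : Matrix (Fin d) (Fin d) ℂ, u ∈ Matrix.unitaryGroup (Fin d) ℂ →
      h * (u ⊗ₖ u) = (u ⊗ₖ u) * h) (x y : Fin d) (hxy : x ≠ y) :
    h (x, x) (x, x) = h (x, y) (x, y) + h (y, x) (x, y) := by
  have hyx := hxy.symm
  set v : Fin d → ℂ := Pi.single x 1 + Pi.single y 2 with hv
  have hvx : v x = 1 := by simp [hv, hxy]
  have hvy : v y = 2 := by simp [hv, hyx]
  have hvv : v ⬝ᵥ v = 5 := by
    rw [show v ⬝ᵥ v = v ⬝ᵥ (Pi.single x 1 + Pi.single y 2) from rfl]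
    rw [dotProduct_add, dotProduct_single, dotProduct_single, hvx, hvy]
    norm_num
  have hsv : star v = v := by
    ext i
    simp only [hv, Pi.star_apply, Pi.add_apply, Pi.single_apply]
    split_ifs <;> simp
  have hu : (1 - (2 / 5 : ℂ) • Matrix.vecMulVec v v) ∈ Matrix.unitaryGroup (Fin d) ℂ := by
    have hs : star (1 - (2 / 5 : ℂ) • Matrix.vecMulVec v v) =
        1 - (2 / 5 : ℂ) • Matrix.vecMulVec v v := by
      rw [Matrix.star_eq_conjTranspose, Matrix.conjTranspose_sub, Matrix.conjTranspose_smul,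
        Matrix.conjTranspose_vecMulVec, hsv, Matrix.conjTranspose_one]
      simp
    rw [Matrix.mem_unitaryGroup_iff, hs]
    have hm : Matrix.vecMulVec v v * Matrix.vecMulVec v v = (5 : ℂ) • Matrix.vecMulVec v v := by
      rw [Matrix.vecMulVec_mul_vecMulVec, hvv, Matrix.vecMulVec_smul]
    simp only [sub_mul, mul_sub, one_mul, mul_one, smul_mul_assoc, mul_smul_comm, hm]
    module
  have e := congrFun (congrFun (hcomm _ hu) (x, x)) (x, y)
  rw [Matrix.mul_apply, Matrix.mul_apply, Finset.sum_eq_single (x, x),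
    Finset.sum_eq_add (x, y) (y, x)] at e
  · simp [Matrix.kroneckerMap_apply, Matrix.vecMulVec_apply, hvx, hvy, hxy] at e
    linear_combination (-25 / 12 : ℂ) * e
  · simp [hxy]
  · rintro ⟨a, b⟩ - ⟨n1, n2⟩
    rw [comm_supp_aux d h hcomm, mul_zero]
    · rintro ⟨rfl, rfl⟩; exact n1 rfl
    · rintro ⟨rfl, rfl⟩; exact n2 rfl
  · simp
  · simp
  · rintro ⟨a, b⟩ - n1
    rw [comm_supp_aux d h hcomm, zero_mul]
    · rintro ⟨rfl, rfl⟩; exact n1 rfl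
    · rintro ⟨rfl, rfl⟩; exact n1 rfl
  · simp

/-- Any `d²×d²` matrix commuting with `u ⊗ u` for every unitary `u` is a linear
combination of the identity and the swap operator. -/
theorem commutant_of_diagonal_unitaries (d : ℕ) (hd : 2 ≤ d)
    (h : Matrix (Fin d × Fin d) (Fin d × Fin d) ℂ)
    (hcomm : ∀ u : Matrix (Fin d) (Fin d) ℂ, u ∈ Matrix.unitaryGroup (Fin d) ℂ →
      h * (u ⊗ₖ u) = (u ⊗ₖ u) * h) :
    ∃ a b : ℂ, h = a • (1 : Matrix (Fin d × Fin d) (Fin d × Fin d) ℂ) + b • swapOp d := by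
  have hz : (⟨0, by omega⟩ : Fin d) ≠ ⟨1, by omega⟩ := by simp
  generalize (⟨0, by omega⟩ : Fin d) = x at hz
  generalize (⟨1, by omega⟩ : Fin d) = y at hz
  refine ⟨h (x, y) (x, y), h (y, x) (x, y), ?_⟩
  have hrot := comm_rot_aux d h hcomm x y hz
  ext ⟨i, j⟩ ⟨k, l⟩
  simp only [Matrix.add_apply, Matrix.smul_apply, Matrix.one_apply, swapOp, smul_eq_mul,
    Prod.mk.injEq]
  by_cases hij : i = j
  · subst hij
    by_cases c : i = k ∧ i = l
    · obtain ⟨rfl, rfl⟩ := c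
      have := comm_perm_aux d h hcomm (Equiv.swap x i) x x x x
      simp only [Equiv.swap_apply_left] at this
      simp [this, hrot]
    · rw [comm_supp_aux d h hcomm _ _ _ _ c (fun c' => c ⟨c'.2, c'.1⟩), if_neg c,
        if_neg (fun c' => c ⟨c'.2, c'.1⟩)]
      simp
  · obtain ⟨σ, rfl, rfl⟩ := perm_two_aux x y i j hz hij
    by_cases c : σ x = k ∧ σ y = l
    · obtain ⟨rfl, rfl⟩ := c
      rw [comm_perm_aux d h hcomm]
      simp [hz]
    · by_cases c' : σ x = l ∧ σ y = k
      · obtain ⟨rfl, rfl⟩ := c'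
        have := comm_perm_aux d h hcomm (Equiv.swap x y) x y y x
        simp only [Equiv.swap_apply_left, Equiv.swap_apply_right] at this
        rw [comm_perm_aux d h hcomm, ← this]
        simp [hz]
      · rw [comm_supp_aux d h hcomm _ _ _ _ c c', if_neg c, if_neg c']
        simp
end

section
/- (Engineering SPT Hamiltonians from Ising interactions) Let S^x, S^y, S^z be the spin-1 matrices on ℂ³ and define the 9×9 matrices h_1 = Σ_{a∈{x,y,z}} S^a ⊗ S^a, h_2 = h_1², and h_3 = Σ_{(a,b,c)} (S^a S^b ⊗ S^c + S^a ⊗ S^b S^c), where the sum runs over all six permutations (a,b,c) of (x,y,z). Then for all real numbers p, q with 2|q| ≤ p ≤ 2 − 2|q|, there exist finitely many unitary 3×3 matrices u_1,…,u_k, reals α_1,…,α_k ≥ 0 with Σ_i α_i = 1, a real β > 0, and a real c such that Σ_i α_i (u_i ⊗ u_i)† (S^z ⊗ S^z) (u_i ⊗ u_i) = β (h_1 + p h_2 + q h_3) − c·I, where I is the 9×9 identity matrix. -/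
open Matrix Kronecker
open scoped BigOperators

/-- The spin-1 matrix `S^x` on `ℂ³`. -/
noncomputable def spinX : Matrix (Fin 3) (Fin 3) ℂ :=
  ((1 : ℂ) / Real.sqrt 2) • !![0, 1, 0; 1, 0, 1; 0, 1, 0]

/-- The spin-1 matrix `S^y` on `ℂ³`. -/
noncomputable def spinY : Matrix (Fin 3) (Fin 3) ℂ :=
  ((1 : ℂ) / Real.sqrt 2) •
    !![0, -Complex.I, 0; Complex.I, 0, -Complex.I; 0, Complex.I, 0]

/-- The spin-1 matrix `S^z` on `ℂ³`. -/
noncomputable def spinZ : Matrix (Fin 3) (Fin 3) ℂ :=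
  !![1, 0, 0; 0, 0, 0; 0, 0, -1]

/-- The spin-1 matrices indexed as `S 0 = S^x`, `S 1 = S^y`, `S 2 = S^z`. -/
noncomputable def spin : Fin 3 → Matrix (Fin 3) (Fin 3) ℂ := ![spinX, spinY, spinZ]

/-- The Heisenberg interaction `h₁ = Σ_a S^a ⊗ S^a`. -/
noncomputable def hOne : Matrix (Fin 3 × Fin 3) (Fin 3 × Fin 3) ℂ :=
  ∑ a : Fin 3, spin a ⊗ₖ spin a

/-- The biquadratic interaction `h₂ = h₁²`. -/
noncomputable def hTwo : Matrix (Fin 3 × Fin 3) (Fin 3 × Fin 3) ℂ := hOne * hOne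

/-- The interaction `h₃ = Σ_{(a,b,c) ∈ S₃} (S^a S^b ⊗ S^c + S^a ⊗ S^b S^c)`, summed over
all six permutations `(a,b,c)` of `(x,y,z)`. -/
noncomputable def hThree : Matrix (Fin 3 × Fin 3) (Fin 3 × Fin 3) ℂ :=
  ∑ σ : Equiv.Perm (Fin 3),
    ((spin (σ 0) * spin (σ 1)) ⊗ₖ spin (σ 2) + spin (σ 0) ⊗ₖ (spin (σ 1) * spin (σ 2)))

/-- The complex number `1/√2`. -/
noncomputable def rr : ℂ := (1 : ℂ) / Real.sqrt 2

theorem rr_sq : rr * rr = 1 / 2 := by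
  unfold rr
  have h : ((Real.sqrt 2 : ℝ) : ℂ) * ((Real.sqrt 2 : ℝ) : ℂ) = 2 := by
    rw [← Complex.ofReal_mul, Real.mul_self_sqrt (by norm_num)]; norm_num
  rw [div_mul_div_comm, h]; norm_num

theorem rr_conj : (starRingEnd ℂ) rr = rr := by
  unfold rr
  simp

theorem spinX_eq : spinX = !![0, rr, 0; rr, 0, rr; 0, rr, 0] := by
  unfold spinX
  ext i j; fin_cases i <;> fin_cases j <;> simp [rr]

theorem spinY_eq : spinY =
    !![0, -(rr * Complex.I), 0; rr * Complex.I, 0, -(rr * Complex.I); 0, rr * Complex.I, 0] := by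
  unfold spinY
  ext i j; fin_cases i <;> fin_cases j <;> simp [rr]

theorem comm_xy : spinX * spinY - spinY * spinX = Complex.I • spinZ := by
  have h := rr_sq
  rw [spinX_eq, spinY_eq, spinZ]
  ext i j; fin_cases i <;> fin_cases j <;> simp [Matrix.mul_apply, Fin.sum_univ_three] <;>
    first | ring1 | linear_combination (2 * Complex.I) * h | linear_combination (-2 * Complex.I) * h

theorem comm_yz : spinY * spinZ - spinZ * spinY = Complex.I • spinX := by
  rw [spinX_eq, spinY_eq, spinZ]
  ext i j; fin_cases i <;> fin_cases j <;> simp [Matrix.mul_apply, Fin.sum_univ_three] <;> ring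

theorem comm_zx : spinZ * spinX - spinX * spinZ = Complex.I • spinY := by
  have h := Complex.I_mul_I
  rw [spinX_eq, spinY_eq, spinZ]
  ext i j; fin_cases i <;> fin_cases j <;> simp [Matrix.mul_apply, Fin.sum_univ_three] <;>
    first | ring1 | linear_combination rr * h | linear_combination -rr * h

theorem casimir : spinX * spinX + spinY * spinY + spinZ * spinZ = (2 : ℂ) • 1 := by
  have h := rr_sq
  have h' := Complex.I_mul_I
  rw [spinX_eq, spinY_eq, spinZ]
  ext i j; fin_cases i <;> fin_cases j <;> simp [Matrix.mul_apply, Fin.sum_univ_three] <;>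
    first
    | ring1
    | linear_combination (2 : ℂ) * h - rr * rr * h'
    | linear_combination (4 : ℂ) * h - 2 * rr * rr * h'
    | linear_combination rr * rr * h'

/-- Cyclic rotation of the three axes. -/
noncomputable def rotR : Matrix (Fin 3) (Fin 3) ℂ :=
  !![-(Complex.I / 2), -(Complex.I * rr), -(Complex.I / 2); rr, 0, -rr;
     Complex.I / 2, -(Complex.I * rr), Complex.I / 2]

theorem rotR_H : rotRᴴ =
    !![Complex.I / 2, rr, -(Complex.I / 2); Complex.I * rr, 0, Complex.I * rr;
      Complex.I / 2, -rr, -(Complex.I / 2)] := by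
  ext i j; fin_cases i <;> fin_cases j <;> simp [rotR, rr_conj] <;> ring1

theorem rotR_unit : rotR ∈ Matrix.unitaryGroup (Fin 3) ℂ := by
  have h := rr_sq
  have h' := Complex.I_mul_I
  rw [Matrix.mem_unitaryGroup_iff, Matrix.star_eq_conjTranspose, rotR_H, rotR]
  ext i j; fin_cases i <;> fin_cases j <;> simp [Matrix.mul_apply, Fin.sum_univ_three] <;>
    grind

theorem rotR_z : rotRᴴ * spinZ * rotR = spinX := by
  have h := rr_sq
  have h' := Complex.I_mul_I
  rw [rotR_H, rotR, spinX_eq, spinZ]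
  ext i j; fin_cases i <;> fin_cases j <;> simp [Matrix.mul_apply, Fin.sum_univ_three] <;>
    grind

theorem rotR_x : rotRᴴ * spinX * rotR = spinY := by
  have h := rr_sq
  have h' := Complex.I_mul_I
  rw [rotR_H, rotR, spinX_eq, spinY_eq]
  ext i j; fin_cases i <;> fin_cases j <;> simp [Matrix.mul_apply, Fin.sum_univ_three] <;>
    grind

theorem rotR_y : rotRᴴ * spinY * rotR = spinZ := by
  have h := rr_sq
  have h' := Complex.I_mul_I
  rw [rotR_H, rotR, spinY_eq, spinZ]
  ext i j; fin_cases i <;> fin_cases j <;> simp [Matrix.mul_apply, Fin.sum_univ_three] <;>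
    grind

/-- The set of matrices reachable from `S^z` by a unitary. -/
def Reach (A : Matrix (Fin 3) (Fin 3) ℂ) : Prop :=
  ∃ u ∈ Matrix.unitaryGroup (Fin 3) ℂ, uᴴ * spinZ * u = A

theorem Reach.rot {A : Matrix (Fin 3) (Fin 3) ℂ} (h : Reach A) : Reach (rotRᴴ * A * rotR) := by
  obtain ⟨u, hu, rfl⟩ := h
  refine ⟨u * rotR, mul_mem hu rotR_unit, ?_⟩
  simp only [Matrix.conjTranspose_mul, Matrix.mul_assoc]

theorem rotR_mul (A B : Matrix (Fin 3) (Fin 3) ℂ) :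
    rotRᴴ * (A * B) * rotR = (rotRᴴ * A * rotR) * (rotRᴴ * B * rotR) := by
  have h : rotR * rotRᴴ = 1 := by
    have := rotR_unit
    rwa [Matrix.mem_unitaryGroup_iff, Matrix.star_eq_conjTranspose] at this
  calc rotRᴴ * (A * B) * rotR = rotRᴴ * A * 1 * B * rotR := by simp [Matrix.mul_assoc]
    _ = _ := by rw [← h]; simp only [Matrix.mul_assoc]

theorem reach_zy (c s : ℝ) (h : c ^ 2 + s ^ 2 = 1) :
    Reach (((c ^ 2 - s ^ 2 : ℝ) : ℂ) • spinZ +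
      ((2 * c * s : ℝ) : ℂ) • (spinX * spinY + spinY * spinX)) := by
  have hc : (c : ℂ) ^ 2 + (s : ℂ) ^ 2 = 1 := by exact_mod_cast h
  have h1 := rr_sq
  have h' := Complex.I_mul_I
  have hH : (!![(c : ℂ), 0, -(Complex.I * s); 0, 1, 0; -(Complex.I * s), 0, (c : ℂ)])ᴴ =
      !![(c : ℂ), 0, Complex.I * s; 0, 1, 0; Complex.I * s, 0, (c : ℂ)] := by
    ext i j; fin_cases i <;> fin_cases j <;> simp
  refine ⟨!![(c : ℂ), 0, -(Complex.I * s); 0, 1, 0; -(Complex.I * s), 0, (c : ℂ)], ?_, ?_⟩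
  · rw [Matrix.mem_unitaryGroup_iff, Matrix.star_eq_conjTranspose, hH]
    ext i j; fin_cases i <;> fin_cases j <;> simp [Matrix.mul_apply, Fin.sum_univ_three] <;>
      grind
  · rw [hH, spinX_eq, spinY_eq, spinZ]
    ext i j; fin_cases i <;> fin_cases j <;> simp [Matrix.mul_apply, Fin.sum_univ_three] <;>
      grind

theorem reach_d : Reach (spinX * spinX - spinY * spinY) := by
  have h1 := rr_sq
  have h' := Complex.I_mul_I
  have hH : (!![rr, 0, rr; 0, 1, 0; -rr, 0, rr])ᴴ =
      !![rr, 0, -rr; 0, 1, 0; rr, 0, rr] := by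
    ext i j; fin_cases i <;> fin_cases j <;> simp [rr_conj]
  refine ⟨!![rr, 0, rr; 0, 1, 0; -rr, 0, rr], ?_, ?_⟩
  · rw [Matrix.mem_unitaryGroup_iff, Matrix.star_eq_conjTranspose, hH]
    ext i j; fin_cases i <;> fin_cases j <;> simp [Matrix.mul_apply, Fin.sum_univ_three] <;>
      grind
  · rw [hH, spinX_eq, spinY_eq, spinZ]
    ext i j; fin_cases i <;> fin_cases j <;> simp [Matrix.mul_apply, Fin.sum_univ_three] <;>
      grind

/-- The three linear spin operators, in the order `z, x, y`. -/
noncomputable def zz : Fin 3 → Matrix (Fin 3) (Fin 3) ℂ := ![spinZ, spinX, spinY]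
/-- The off-diagonal quadrupoles. -/
noncomputable def yy : Fin 3 → Matrix (Fin 3) (Fin 3) ℂ :=
  ![spinX * spinY + spinY * spinX, spinY * spinZ + spinZ * spinY, spinZ * spinX + spinX * spinZ]
/-- The diagonal quadrupoles. -/
noncomputable def xx : Fin 3 → Matrix (Fin 3) (Fin 3) ℂ :=
  ![spinX * spinX - spinY * spinY, spinY * spinY - spinZ * spinZ, spinZ * spinZ - spinX * spinX]

theorem reach_zy_all (c s : ℝ) (h : c ^ 2 + s ^ 2 = 1) (k : Fin 3) :
    Reach (((c ^ 2 - s ^ 2 : ℝ) : ℂ) • zz k + ((2 * c * s : ℝ) : ℂ) • yy k) := by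
  have h0 := reach_zy c s h
  have h1 := h0.rot
  have h2 := h1.rot
  simp only [Matrix.mul_add, Matrix.add_mul, Matrix.mul_smul, Matrix.smul_mul, rotR_mul,
    rotR_x, rotR_y, rotR_z] at h1 h2
  fin_cases k
  · exact h0
  · simpa [zz, yy] using h1
  · simpa [zz, yy] using h2

theorem reach_d_all (k : Fin 3) : Reach (xx k) := by
  have h0 := reach_d
  have h1 := h0.rot
  have h2 := h1.rot
  simp only [Matrix.mul_sub, Matrix.sub_mul, rotR_mul, rotR_x, rotR_y, rotR_z] at h1 h2
  fin_cases k
  · exact h0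
  · exact h1
  · exact h2

theorem hOne_eq : hOne = ∑ k, zz k ⊗ₖ zz k := by
  simp only [hOne, spin, zz, Fin.sum_univ_three, Matrix.cons_val]
  abel

theorem perm_univ : (Finset.univ : Finset (Equiv.Perm (Fin 3))) =
    {1, Equiv.swap 0 1, Equiv.swap 0 2, Equiv.swap 1 2, Equiv.swap 0 1 * Equiv.swap 1 2,
      Equiv.swap 1 2 * Equiv.swap 0 1} := by decide

theorem hThree_eq : hThree = ∑ k, (yy k ⊗ₖ zz k + zz k ⊗ₖ yy k) := by
  rw [hThree, perm_univ]
  rw [Finset.sum_insert (by decide), Finset.sum_insert (by decide), Finset.sum_insert (by decide),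
    Finset.sum_insert (by decide), Finset.sum_insert (by decide), Finset.sum_singleton]
  have e1 : (Equiv.swap (0 : Fin 3) 1) 2 = 2 := by decide
  have e2 : (Equiv.swap (0 : Fin 3) 2) 1 = 1 := by decide
  have e3 : (Equiv.swap (1 : Fin 3) 2) 0 = 0 := by decide
  simp only [Equiv.Perm.mul_apply, Equiv.Perm.one_apply, Equiv.swap_apply_left,
    Equiv.swap_apply_right, e1, e2, e3, spin, zz, yy, Fin.sum_univ_three, Matrix.cons_val,
    Matrix.add_kronecker, Matrix.kronecker_add]
  abel

theorem quad_pair (A B C : Matrix (Fin 3) (Fin 3) ℂ) (h : A * B - B * A = Complex.I • C) :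
    (A * B) ⊗ₖ (A * B) + (B * A) ⊗ₖ (B * A) =
      (1 / 2 : ℂ) • ((A * B + B * A) ⊗ₖ (A * B + B * A)) - (1 / 2 : ℂ) • (C ⊗ₖ C) := by
  have hC : C ⊗ₖ C = -((A * B - B * A) ⊗ₖ (A * B - B * A)) := by
    rw [h, Matrix.smul_kronecker, Matrix.kronecker_smul, smul_smul, Complex.I_mul_I]
    simp
  rw [hC]
  ext ⟨i, i'⟩ ⟨j, j'⟩
  simp only [Matrix.add_apply, Matrix.sub_apply, Matrix.neg_apply, Matrix.smul_apply,
    Matrix.kroneckerMap_apply, smul_eq_mul]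
  ring

theorem quad_diag (A B C : Matrix (Fin 3) (Fin 3) ℂ) (h : A + B + C = (2 : ℂ) • 1) :
    A ⊗ₖ A + B ⊗ₖ B + C ⊗ₖ C =
      (1 / 3 : ℂ) • ((A - B) ⊗ₖ (A - B) + (B - C) ⊗ₖ (B - C) + (C - A) ⊗ₖ (C - A)) +
      (4 / 3 : ℂ) • 1 := by
  have h4 : (1 : Matrix (Fin 3 × Fin 3) (Fin 3 × Fin 3) ℂ) =
      (1 / 4 : ℂ) • ((A + B + C) ⊗ₖ (A + B + C)) := by
    rw [h, Matrix.smul_kronecker, Matrix.kronecker_smul, smul_smul, smul_smul,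
      Matrix.one_kronecker_one]
    norm_num
  rw [h4]
  ext ⟨i, i'⟩ ⟨j, j'⟩
  simp only [Matrix.add_apply, Matrix.sub_apply, Matrix.smul_apply,
    Matrix.kroneckerMap_apply, smul_eq_mul]
  ring

theorem hTwo_eq : hTwo = (-1 / 2 : ℂ) • ∑ k, zz k ⊗ₖ zz k + (1 / 2 : ℂ) • ∑ k, yy k ⊗ₖ yy k
    + (1 / 3 : ℂ) • ∑ k, xx k ⊗ₖ xx k + (4 / 3 : ℂ) • 1 := by
  have a := quad_pair _ _ _ comm_xy
  have b := quad_pair _ _ _ comm_yz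
  have c := quad_pair _ _ _ comm_zx
  have d := quad_diag _ _ _ casimir
  have e : hTwo = ((spinX * spinX) ⊗ₖ (spinX * spinX) + (spinY * spinY) ⊗ₖ (spinY * spinY)
      + (spinZ * spinZ) ⊗ₖ (spinZ * spinZ))
      + ((spinX * spinY) ⊗ₖ (spinX * spinY) + (spinY * spinX) ⊗ₖ (spinY * spinX))
      + ((spinY * spinZ) ⊗ₖ (spinY * spinZ) + (spinZ * spinY) ⊗ₖ (spinZ * spinY))
      + ((spinZ * spinX) ⊗ₖ (spinZ * spinX) + (spinX * spinZ) ⊗ₖ (spinX * spinZ)) := by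
    simp only [hTwo, hOne, spin, Fin.sum_univ_three, Matrix.cons_val, Matrix.mul_add,
      Matrix.add_mul, ← Matrix.mul_kronecker_mul]
    abel
  rw [e, a, b, c, d]
  simp only [zz, yy, xx, Fin.sum_univ_three, Matrix.cons_val]
  module

theorem reach_z (k : Fin 3) : Reach (zz k) := by
  have := reach_zy_all 1 0 (by norm_num) k
  simpa using this

theorem reach_y (k : Fin 3) : Reach (yy k) := by
  have h2 : Real.sqrt 2 * Real.sqrt 2 = 2 := Real.mul_self_sqrt (by norm_num)
  have := reach_zy_all (Real.sqrt 2 / 2) (Real.sqrt 2 / 2) (by nlinarith) k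
  rw [show 2 * (Real.sqrt 2 / 2) * (Real.sqrt 2 / 2) = 1 by nlinarith] at this
  simpa using this

theorem reach_pm (k : Fin 3) : Reach (rr • zz k + rr • yy k) ∧ Reach (rr • zz k - rr • yy k) := by
  have hr : rr = ((Real.sqrt 2 / 2 : ℝ) : ℂ) := by
    unfold rr
    rw [show Real.sqrt 2 / 2 = 1 / Real.sqrt 2 by
      rw [div_eq_div_iff] <;> norm_num]
    norm_num
  have hc : Real.cos (Real.pi / 8) ^ 2 - Real.sin (Real.pi / 8) ^ 2 = Real.sqrt 2 / 2 := by
    rw [← Real.cos_two_mul', ← Real.cos_pi_div_four]; congr 1; ring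
  have hs : 2 * Real.cos (Real.pi / 8) * Real.sin (Real.pi / 8) = Real.sqrt 2 / 2 := by
    rw [show 2 * Real.cos (Real.pi / 8) * Real.sin (Real.pi / 8)
      = 2 * Real.sin (Real.pi / 8) * Real.cos (Real.pi / 8) by ring,
      ← Real.sin_two_mul, ← Real.sin_pi_div_four]; congr 1; ring
  constructor
  · have := reach_zy_all _ _ (Real.cos_sq_add_sin_sq (Real.pi / 8)) k
    rwa [hc, hs, ← hr] at this
  · have := reach_zy_all (Real.cos (Real.pi / 8)) (-Real.sin (Real.pi / 8))
      (by rw [neg_sq]; exact Real.cos_sq_add_sin_sq _) k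
    rw [neg_sq, mul_neg, hc, hs, Complex.ofReal_neg, ← hr, neg_smul, ← sub_eq_add_neg] at this
    exact this

theorem kron_plus (A B : Matrix (Fin 3) (Fin 3) ℂ) :
    (rr • A + rr • B) ⊗ₖ (rr • A + rr • B) =
      (1 / 2 : ℂ) • (A ⊗ₖ A + B ⊗ₖ B + (B ⊗ₖ A + A ⊗ₖ B)) := by
  rw [← rr_sq]
  ext ⟨i, i'⟩ ⟨j, j'⟩
  simp only [Matrix.add_apply, Matrix.smul_apply, Matrix.kroneckerMap_apply, smul_eq_mul]
  ring

theorem kron_minus (A B : Matrix (Fin 3) (Fin 3) ℂ) :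
    (rr • A - rr • B) ⊗ₖ (rr • A - rr • B) =
      (1 / 2 : ℂ) • (A ⊗ₖ A + B ⊗ₖ B - (B ⊗ₖ A + A ⊗ₖ B)) := by
  rw [← rr_sq]
  ext ⟨i, i'⟩ ⟨j, j'⟩
  simp only [Matrix.add_apply, Matrix.sub_apply, Matrix.smul_apply, Matrix.kroneckerMap_apply,
    smul_eq_mul]
  ring

/-- The five reachable operators attached to each axis. -/
noncomputable def ops (x : Fin 3 × Fin 5) : Matrix (Fin 3) (Fin 3) ℂ :=
  ![zz x.1, yy x.1, rr • zz x.1 + rr • yy x.1, rr • zz x.1 - rr • yy x.1, xx x.1] x.2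

theorem ops_reach (x : Fin 3 × Fin 5) : Reach (ops x) := by
  obtain ⟨k, j⟩ := x
  fin_cases j
  · exact reach_z k
  · exact reach_y k
  · exact (reach_pm k).1
  · exact (reach_pm k).2
  · exact reach_d_all k

/-- The (unnormalized) weights. -/
noncomputable def wts (p q : ℝ) : Fin 5 → ℝ :=
  ![1 - p / 2 - |q|, p / 2 - |q|, |q| + q, |q| - q, p / 3]

theorem conj_kron (u A : Matrix (Fin 3) (Fin 3) ℂ) :
    (u ⊗ₖ u)ᴴ * (A ⊗ₖ A) * (u ⊗ₖ u) = (uᴴ * A * u) ⊗ₖ (uᴴ * A * u) := by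
  rw [Matrix.conjTranspose_kronecker, ← Matrix.mul_kronecker_mul, ← Matrix.mul_kronecker_mul]

theorem main_identity (p q β : ℝ) :
    ∑ x : Fin 3 × Fin 5, ((β * wts p q x.2 : ℝ) : ℂ) • (ops x ⊗ₖ ops x) =
      (β : ℂ) • (hOne + (p : ℂ) • hTwo + (q : ℂ) • hThree) - ((β * p * (4 / 3) : ℝ) : ℂ) • 1 := by
  rw [hTwo_eq, hOne_eq, hThree_eq, Fintype.sum_prod_type]
  simp only [Fin.sum_univ_five, ops, wts, Matrix.cons_val, kron_plus, kron_minus,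
    Fin.sum_univ_three]
  push_cast
  module

/-- For all `p, q` with `2|q| ≤ p ≤ 2 - 2|q|`, the SPT Hamiltonian `h₁ + p h₂ + q h₃` can
be engineered (up to a positive rescaling `β` and an identity shift `c I`) from nearest
neighbor Ising interactions `S^z ⊗ S^z` using a global pulse sequence. -/
theorem engineer_SPT_from_Ising (p q : ℝ)
    (hpq1 : 2 * |q| ≤ p) (hpq2 : p ≤ 2 - 2 * |q|) :
    ∃ (k : ℕ) (u : Fin k → Matrix (Fin 3) (Fin 3) ℂ) (α : Fin k → ℝ) (β c : ℝ),
      (∀ i, u i ∈ Matrix.unitaryGroup (Fin 3) ℂ) ∧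
      (∀ i, 0 ≤ α i) ∧ (∑ i, α i = 1) ∧ 0 < β ∧
      ∑ i, (α i : ℂ) • ((u i ⊗ₖ u i)ᴴ * (spinZ ⊗ₖ spinZ) * (u i ⊗ₖ u i)) =
        (β : ℂ) • (hOne + (p : ℂ) • hTwo + (q : ℂ) • hThree) - (c : ℂ) • 1 := by
  have hq := abs_nonneg q
  have hq1 := le_abs_self q
  have hq2 := neg_abs_le q
  have hp : 0 < 3 + p := by linarith
  have hβ : 0 < 1 / (3 + p) := by positivity
  choose U hU hUA using ops_reach
  let e := Fintype.equivFin (Fin 3 × Fin 5)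
  refine ⟨Fintype.card (Fin 3 × Fin 5), fun i => U (e.symm i),
    fun i => 1 / (3 + p) * wts p q (e.symm i).2, 1 / (3 + p), 1 / (3 + p) * p * (4 / 3),
    fun i => hU _, fun i => mul_nonneg hβ.le ?_, ?_, hβ, ?_⟩
  · generalize (e.symm i).2 = j
    fin_cases j <;> simp [wts] <;> linarith
  · rw [Equiv.sum_comp e.symm (fun x => 1 / (3 + p) * wts p q x.2), Fintype.sum_prod_type]
    simp only [Fin.sum_univ_five, Fin.sum_univ_three, wts, Matrix.cons_val]
    field_simp
    ring
  · rw [Equiv.sum_comp e.symm (fun x => ((1 / (3 + p) * wts p q x.2 : ℝ) : ℂ) •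
      ((U x ⊗ₖ U x)ᴴ * (spinZ ⊗ₖ spinZ) * (U x ⊗ₖ U x)))]
    simp only [conj_kron, hUA]
    exact main_identity p q _
end
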